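/- Let n = 3^{k₁} + 3^{k₂} + 3^{k₃} with integers k₁ > k₂ > k₃ ≥ 0. Let Lₙ = ℚ(x₁, …, xₙ) be the field of rational functions in n independent variables over ℚ, let Fₙ = Lₙ^{Sₙ} be the fixed field of the symmetric group Sₙ acting by permuting x₁, …, xₙ, and let Eₙ = Lₙ^{Sₙ₋₁} = Fₙ(x₁) be the fixed field of the subgroup Sₙ₋₁ permuting only x₂, …, xₙ (so [Eₙ : Fₙ] = n). Then there does not exist a nonzero δ ∈ Eₙ with Tr_{Eₙ/Fₙ}(δ) = 0 and Tr_{Eₙ/Fₙ}(δ³) = 0. -/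

import Mathlib

noncomputable section

namespace GenExt

/-- `Lₙ = ℚ(x₁, …, xₙ)`, the field of rational functions in `n` variables over `ℚ`. -/
def L (n : ℕ) : Type := FractionRing (MvPolynomial (Fin n) ℚ)

noncomputable instance (n : ℕ) : Field (L n) :=
  inferInstanceAs (Field (FractionRing (MvPolynomial (Fin n) ℚ)))

noncomputable instance (n : ℕ) : Algebra (MvPolynomial (Fin n) ℚ) (L n) :=
  inferInstanceAs (Algebra (MvPolynomial (Fin n) ℚ) (FractionRing (MvPolynomial (Fin n) ℚ)))

instance (n : ℕ) : IsFractionRing (MvPolynomial (Fin n) ℚ) (L n) :=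
  inferInstanceAs
    (IsFractionRing (MvPolynomial (Fin n) ℚ) (FractionRing (MvPolynomial (Fin n) ℚ)))

/-- The automorphism of `Lₙ` induced by a permutation `σ ∈ Sₙ` of the variables
`x₁, …, xₙ`. -/
noncomputable def permAut (n : ℕ) (σ : Equiv.Perm (Fin n)) : L n ≃+* L n :=
  IsFractionRing.ringEquivOfRingEquiv (MvPolynomial.renameEquiv ℚ σ).toRingEquiv

/-- The subfield of `Lₙ` consisting of elements fixed by all permutations in `S`. -/
noncomputable def fixedSubfield (n : ℕ) (S : Set (Equiv.Perm (Fin n))) : Subfield (L n) where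
  carrier := {a | ∀ σ ∈ S, permAut n σ a = a}
  mul_mem' := fun ha hb σ hσ => by rw [map_mul, ha σ hσ, hb σ hσ]
  one_mem' := fun σ _ => map_one _
  add_mem' := fun ha hb σ hσ => by rw [map_add, ha σ hσ, hb σ hσ]
  zero_mem' := fun σ _ => map_zero _
  neg_mem' := fun ha σ hσ => by rw [map_neg, ha σ hσ]
  inv_mem' := fun a ha σ hσ => by rw [map_inv₀, ha σ hσ]

/-- `Fₙ = Lₙ^{Sₙ}`, the fixed field of the full symmetric group. -/
noncomputable def F (n : ℕ) : Subfield (L n) := fixedSubfield n Set.univ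

/-- `Eₙ = Lₙ^{Sₙ₋₁}`, the fixed field of the subgroup of permutations fixing `x₁`
(i.e. permuting only `x₂, …, xₙ`). -/
noncomputable def E (n : ℕ) : Subfield (L n) :=
  fixedSubfield n {σ | ∀ i : Fin n, (i : ℕ) = 0 → σ i = i}

theorem F_le_E (n : ℕ) : F n ≤ E n := fun _ ha σ _ => ha σ (Set.mem_univ σ)

/-- `Eₙ` is an `Fₙ`-algebra via the inclusion `Fₙ ⊆ Eₙ`. -/
noncomputable instance (n : ℕ) : Algebra (F n) (E n) :=
  (Subfield.inclusion (F_le_E n)).toAlgebra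

end GenExt

/-!
Clearing denominators, an element of `Eₙ` whose first and third power traces vanish gives a family
of polynomials `P i`, permuted by `Sₙ` like the variables, with `∑ P i = ∑ P i ^ 3 = 0`. Split the
variables into blocks of sizes `3 ^ k₁`, `3 ^ k₂`, `3 ^ k₃`, each identified with a vector space
over `ℤ/3`. A Fourier substitution over `ℚ(ω)` diagonalises the translations of the blocks, and the
coefficients of the largest leading monomial form an eigenvector of all of them. Its values `C b`
on the blocks satisfy `∑ 3 ^ k b * C b = ∑ 3 ^ k b * C b ^ 3 = 0`. A rational binary cubic with a
zero over a quadratic field has a rational zero, so there is a nonzero rational solution too.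

Comparing `3`-adic valuations, the solution has the form `1 + w ^ 3 = N * (g + w) ^ 3` with
`N = 9 ^ b` and `g = 9 ^ d`. If `b ≡ 0` mod `3` this contradicts Fermat's theorem for exponent
three, and if `b ≡ 2` it contradicts infinite descent for `x ^ 3 + y ^ 3 = 3 * z ^ 3`. If `b ≡ 1`,
the integer `(N - 1) * w + N * g` agrees with `(1 - N) ^ (2 / 3)` to high `3`-adic precision while
being small in absolute value. Padé approximants to `(1 - X) ^ (2 / 3)` exclude this, apart from
finitely many small cases that are ruled out by congruences.
-/

namespace HermiteJoubert

section CubicBinomialSeries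

open Finset PowerSeries Nat

lemma factorial_dvd_pow_mul_prod {p : ℕ} (hp : p.Prime) (a : ℤ) (i : ℕ) :
    (i ! : ℤ) ∣ (p : ℤ) ^ i * ∏ l ∈ range i, (p * (l : ℤ) - a) := by
  obtain ⟨v, m, hpm, hvm⟩ := Nat.exists_eq_pow_mul_and_not_dvd i.factorial_ne_zero p hp.ne_one
  have hvi : v ≤ i := by
    have : Fact p.Prime := ⟨hp⟩
    exact ((padicValNat_dvd_iff_le i.factorial_ne_zero).1 ⟨m, hvm⟩).trans
      (padicValNat_factorial_le ..)
  have hm : (m : ℤ) ∣ ∏ l ∈ range i, (p * (l : ℤ) - a) := by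
    obtain ⟨c, c', hcc⟩ : IsCoprime (p : ℤ) m :=
      Nat.isCoprime_iff_coprime.2 ((Nat.Prime.coprime_iff_not_dvd hp).2 hpm)
    have hmod : ∏ l ∈ range i, (p * (l : ℤ) - a) ≡
        ∏ l ∈ range i, p * (-(c * a) + (l : ℤ)) [ZMOD m] :=
      Int.ModEq.prod fun l _ ↦ Int.modEq_iff_dvd.2 ⟨a * c', by linear_combination -a * hcc⟩
    rw [hmod.dvd_iff, prod_mul_distrib]
    refine Dvd.dvd.mul_left (dvd_trans ?_ (Nat.factorial_coe_dvd_prod i (-(c * a)))) _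
    exact_mod_cast Dvd.intro_left _ hvm.symm
  rw [hvm]
  push_cast
  exact mul_dvd_mul (pow_dvd_pow _ hvi) hm

/-- The coefficient of `X ^ i` in `(1 - 9 X) ^ (a / 3)`. The division is exact by
`factorial_dvd_pow_mul_prod`, and the factor `9` is what makes all coefficients integers. -/
def cubicBinomCoeff (a : ℤ) (i : ℕ) : ℤ := (3 ^ i * ∏ l ∈ range i, (3 * (l : ℤ) - a)) / i !

@[simp]
lemma cubicBinomCoeff_zero (a : ℤ) : cubicBinomCoeff a 0 = 1 := by simp [cubicBinomCoeff]

lemma factorial_mul_cubicBinomCoeff (a : ℤ) (i : ℕ) :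
    i ! * cubicBinomCoeff a i = 3 ^ i * ∏ l ∈ range i, (3 * (l : ℤ) - a) :=
  Int.mul_ediv_cancel' (factorial_dvd_pow_mul_prod Nat.prime_three a i)

lemma succ_mul_cubicBinomCoeff_succ (a : ℤ) (i : ℕ) :
    (i + 1) * cubicBinomCoeff a (i + 1) = 3 * (3 * i - a) * cubicBinomCoeff a i := by
  have hsucc := factorial_mul_cubicBinomCoeff a (i + 1)
  rw [Nat.factorial_succ, prod_range_succ] at hsucc
  push_cast at hsucc
  refine mul_left_cancel₀ (Nat.cast_ne_zero.2 i.factorial_ne_zero : (i ! : ℤ) ≠ 0) ?_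
  linear_combination hsucc - 3 * (3 * (i : ℤ) - a) * factorial_mul_cubicBinomCoeff a i

lemma cubicBinomCoeff_ne_zero {a : ℤ} (ha : ¬ 3 ∣ a) (i : ℕ) : cubicBinomCoeff a i ≠ 0 := by
  refine right_ne_zero_of_mul (a := (i ! : ℤ)) ?_
  rw [factorial_mul_cubicBinomCoeff]
  refine mul_ne_zero (by positivity) (prod_ne_zero_iff.2 fun l _ h ↦ ha ⟨l, ?_⟩)
  linear_combination -h

/-- The power series `(1 - 9 X) ^ (a / 3)`, which has integer coefficients. -/
def cubicBinomSeries (a : ℤ) : ℤ⟦X⟧ := .mk (cubicBinomCoeff a)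

@[simp]
lemma coeff_cubicBinomSeries (a : ℤ) (i : ℕ) :
    coeff i (cubicBinomSeries a) = cubicBinomCoeff a i := coeff_mk _ _

lemma coeff_one_sub_nine_X_mul_derivative (y : ℤ⟦X⟧) (s : ℕ) :
    coeff s ((1 - 9 * X) * d⁄dX ℤ y) = (s + 1) * coeff (s + 1) y - 9 * s * coeff s y := by
  rw [show (1 - 9 * X) * d⁄dX ℤ y = d⁄dX ℤ y - C 9 * (X * d⁄dX ℤ y) by rw [map_ofNat]; ring]
  rw [map_sub, coeff_C_mul, coeff_derivative]
  cases s with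
  | zero => simp
  | succ s =>
    rw [coeff_succ_X_mul, coeff_derivative]
    push_cast
    ring

lemma cubicBinomSeries_ode (a : ℤ) :
    (1 - 9 * X) * d⁄dX ℤ (cubicBinomSeries a) = C (-3 * a) * cubicBinomSeries a := by
  ext s
  rw [coeff_one_sub_nine_X_mul_derivative, coeff_C_mul]
  simp only [coeff_cubicBinomSeries]
  linear_combination succ_mul_cubicBinomCoeff_succ a s

lemma cubicBinomSeries_ode_second (a : ℤ) :
    (1 - 9 * X) * d⁄dX ℤ (d⁄dX ℤ (cubicBinomSeries a))
      = C (9 - 3 * a) * d⁄dX ℤ (cubicBinomSeries a) := by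
  have h := congrArg (d⁄dX ℤ) (cubicBinomSeries_ode a)
  rw [show (9 : ℤ⟦X⟧) = C 9 from (map_ofNat C 9).symm] at h ⊢
  simp only [Derivation.leibniz, map_sub, derivative_C, derivative_X, smul_eq_mul,
    derivative_one] at h
  simp only [map_sub, map_mul, map_neg] at h ⊢
  linear_combination h

lemma eq_cubicBinomSeries_of_ode {a : ℤ} {y : ℤ⟦X⟧}
    (hode : (1 - 9 * X) * d⁄dX ℤ y = C (-3 * a) * y) (hy : coeff 0 y = 1) :
    y = cubicBinomSeries a := by
  ext s
  induction s with
  | zero => simpa using hy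
  | succ s ih =>
    have hs := congrArg (coeff s) hode
    rw [coeff_one_sub_nine_X_mul_derivative, coeff_C_mul, ih, coeff_cubicBinomSeries] at hs
    refine mul_left_cancel₀ (by positivity : (s : ℤ) + 1 ≠ 0) ?_
    rw [coeff_cubicBinomSeries]
    linear_combination hs - succ_mul_cubicBinomCoeff_succ a s

lemma cubicBinomSeries_three : cubicBinomSeries 3 = 1 - 9 * X := by
  refine (eq_cubicBinomSeries_of_ode ?_ ?_).symm
  · rw [show (9 : ℤ⟦X⟧) = C 9 from (map_ofNat C 9).symm]
    simp only [Derivation.leibniz, map_sub, derivative_C, derivative_X, smul_eq_mul,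
      derivative_one]
    rw [show (-3 * 3 : ℤ) = -9 by norm_num, map_neg]
    ring
  · simp

lemma cubicBinomSeries_pow (a : ℤ) (m : ℕ) :
    cubicBinomSeries a ^ m = cubicBinomSeries (m * a) := by
  refine eq_cubicBinomSeries_of_ode ?_ ?_
  swap
  · rw [coeff_zero_eq_constantCoeff, map_pow, ← coeff_zero_eq_constantCoeff_apply]
    simp
  rcases m with _ | m
  · simp
  rw [derivative_pow, Nat.add_sub_cancel]
  have := cubicBinomSeries_ode a
  simp only [map_mul, map_natCast] at this ⊢
  linear_combination ((m + 1 : ℕ) : ℤ⟦X⟧) * cubicBinomSeries a ^ m * this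

lemma cubicBinomSeries_cube (m : ℕ) : cubicBinomSeries m ^ 3 = (1 - 9 * X) ^ m := by
  rw [← cubicBinomSeries_three, cubicBinomSeries_pow, cubicBinomSeries_pow, mul_comm]
  rfl

end CubicBinomialSeries

section PadeApproximants

open Finset

/-- Denominators and numerators of Padé approximants in one family:
`padePoly (-a) j k` is the denominator and `padePoly a k j` the numerator of the `[k/j]` Padé
approximant of `(1 - 9 X) ^ (a / 3)`. -/
def padePoly (a : ℤ) (j k : ℕ) : Polynomial ℤ :=
  ∑ i ∈ range (j + 1),
    Polynomial.monomial i (cubicBinomCoeff (3 * k + a) i * (j + k - i).choose k)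

lemma coeff_padePoly_of_le (a : ℤ) {j i : ℕ} (k : ℕ) (h : i ≤ j) :
    (padePoly a j k).coeff i = cubicBinomCoeff (3 * k + a) i * (j + k - i).choose k := by
  simp [padePoly, Polynomial.coeff_monomial, h]

lemma coeff_padePoly_of_lt (a : ℤ) {j i : ℕ} (k : ℕ) (h : j < i) :
    (padePoly a j k).coeff i = 0 := by
  simp [padePoly, Polynomial.coeff_monomial, h]

lemma natDegree_padePoly_le (a : ℤ) (j k : ℕ) : (padePoly a j k).natDegree ≤ j :=
  Polynomial.natDegree_le_iff_coeff_eq_zero.2 fun _ h ↦ coeff_padePoly_of_lt a k h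

lemma coeff_padePoly_recurrence (a : ℤ) (j k s : ℕ) :
    ((s : ℤ) + 1) * (s - j - k) * (padePoly a j k).coeff (s + 1)
      = 3 * (3 * s - (3 * k + a)) * (s - j) * (padePoly a j k).coeff s := by
  rcases lt_trichotomy s j with h | rfl | h
  · obtain ⟨r, rfl⟩ : ∃ r, j = s + 1 + r := ⟨j - s - 1, by omega⟩
    have hchoose := Nat.choose_mul_succ_eq (r + k) k
    rw [show r + k + 1 - k = r + 1 by omega] at hchoose
    rw [coeff_padePoly_of_le a k (by omega), coeff_padePoly_of_le a k (by omega),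
      show s + 1 + r + k - (s + 1) = r + k by omega, show s + 1 + r + k - s = r + k + 1 by omega]
    zify at hchoose
    push_cast
    linear_combination
      (-(r : ℤ) - 1 - k) * (r + k).choose k * succ_mul_cubicBinomCoeff_succ (3 * k + a) s
      - 3 * (3 * (s : ℤ) - (3 * k + a)) * cubicBinomCoeff (3 * k + a) s * hchoose
  · rw [coeff_padePoly_of_lt a k (Nat.lt_succ_self s)]
    ring
  · rw [coeff_padePoly_of_lt a k h, coeff_padePoly_of_lt a k (h.trans (Nat.lt_succ_self s))]
    ring

section PowerSeries

open PowerSeries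

/-- The hypergeometric differential operator that annihilates `padePoly a j k` for `m = j + k`,
written in terms of `m` because conjugation by `(1 - 9 X) ^ (a / 3)` turns `a, j` into
`-a, m - j` and keeps `m`. -/
def padeOperator (a m j : ℤ) (y : ℤ⟦X⟧) : ℤ⟦X⟧ :=
  X * ((1 - 9 * X) * d⁄dX ℤ (d⁄dX ℤ y)) - (C m + C (9 - 9 * m - 3 * a) * X) * d⁄dX ℤ y
    - C (j * (9 * (m - j) + 3 * a)) * y

lemma coeff_X_mul_derivative (y : ℤ⟦X⟧) (s : ℕ) :
    coeff s (X * d⁄dX ℤ y) = s * coeff s y := by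
  cases s with
  | zero => simp
  | succ s =>
    rw [coeff_succ_X_mul, coeff_derivative]
    push_cast
    ring

lemma coeff_padeOperator (a m j : ℤ) (y : ℤ⟦X⟧) (s : ℕ) :
    coeff s (padeOperator a m j y)
      = (s + 1) * (s - m) * coeff (s + 1) y
        - 3 * (3 * s - (3 * (m - j) + a)) * (s - j) * coeff s y := by
  have hX : coeff s (X * ((1 - 9 * X) * d⁄dX ℤ (d⁄dX ℤ y)))
      = s * ((s + 1) * coeff (s + 1) y) - 9 * (s * (s - 1)) * coeff s y := by
    cases s with
    | zero => simp
    | succ s =>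
      rw [coeff_succ_X_mul, coeff_one_sub_nine_X_mul_derivative, coeff_derivative,
        coeff_derivative]
      push_cast
      ring
  rw [padeOperator, map_sub, map_sub, add_mul, map_add, mul_assoc (C _) X, hX, coeff_C_mul,
    coeff_C_mul, coeff_C_mul, coeff_X_mul_derivative, coeff_derivative]
  ring

lemma padeOperator_padePoly (a : ℤ) (j k : ℕ) :
    padeOperator a (j + k) j (padePoly a j k : ℤ⟦X⟧) = 0 := by
  ext s
  rw [coeff_padeOperator, Polynomial.coeff_coe, Polynomial.coeff_coe, map_zero]
  linear_combination coeff_padePoly_recurrence a j k s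

lemma padeOperator_cubicBinomSeries_mul (a m j : ℤ) (y : ℤ⟦X⟧) :
    padeOperator a m (m - j) (cubicBinomSeries a * y)
      = cubicBinomSeries a * padeOperator (-a) m j y := by
  have h₁ := cubicBinomSeries_ode a
  have h₂ := cubicBinomSeries_ode_second a
  simp only [padeOperator, Derivation.leibniz, map_add, smul_eq_mul]
  simp only [map_sub, map_neg, map_mul, map_add, map_ofNat] at h₁ h₂ ⊢
  linear_combination X * y * h₂ + (2 * X * d⁄dX ℤ y - C m * y) * h₁

lemma coeff_cubicBinomSeries_mul_padePoly (a : ℤ) {j k s : ℕ} (hs : s ≤ j + k) :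
    coeff s (cubicBinomSeries a * (padePoly (-a) j k : ℤ⟦X⟧)) = (padePoly a k j).coeff s := by
  have hode : padeOperator a (j + k) k (cubicBinomSeries a * (padePoly (-a) j k : ℤ⟦X⟧)) = 0 := by
    rw [show (k : ℤ) = j + k - j by ring, show (j : ℤ) + (j + k - j) = j + k by ring,
      padeOperator_cubicBinomSeries_mul, padeOperator_padePoly, mul_zero]
  induction s with
  | zero =>
    rw [coeff_zero_eq_constantCoeff_apply, map_mul, ← coeff_zero_eq_constantCoeff_apply,
      ← coeff_zero_eq_constantCoeff_apply, Polynomial.coeff_coe,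
      coeff_padePoly_of_le _ _ (Nat.zero_le _), coeff_padePoly_of_le _ _ (Nat.zero_le _),
      coeff_cubicBinomSeries]
    simp [Nat.choose_symm_add.symm, add_comm k j]
  | succ s ih =>
    have hs' := congrArg (coeff s) hode
    rw [coeff_padeOperator, map_zero, ih (by omega)] at hs'
    have hrec := coeff_padePoly_recurrence a k j s
    have hne : ((s : ℤ) + 1) * (s - j - k) ≠ 0 := mul_ne_zero (by positivity) (by omega)
    refine mul_left_cancel₀ hne ?_
    linear_combination hs' - hrec

lemma X_pow_dvd_coe_iff (p : Polynomial ℤ) (n : ℕ) :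
    X ^ n ∣ (p : ℤ⟦X⟧) ↔ Polynomial.X ^ n ∣ p := by
  simp [Polynomial.X_pow_dvd_iff, PowerSeries.X_pow_dvd_iff]

lemma X_pow_dvd_sub_trunc (y : ℤ⟦X⟧) (n : ℕ) : X ^ n ∣ y - (trunc n y : ℤ⟦X⟧) :=
  PowerSeries.X_pow_dvd_iff.2 fun i hi ↦ by rw [map_sub, coeff_coe_trunc_of_lt hi, sub_self]

lemma X_pow_dvd_trunc_cubicBinomSeries_cube_sub (a n : ℕ) :
    Polynomial.X ^ n ∣ trunc n (cubicBinomSeries a) ^ 3 - (1 - 9 * Polynomial.X) ^ a := by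
  rw [← X_pow_dvd_coe_iff]
  push_cast
  rw [show ((9 : Polynomial ℤ) : ℤ⟦X⟧) = 9 from map_ofNat Polynomial.coeToPowerSeries.ringHom 9,
    ← cubicBinomSeries_cube]
  exact (dvd_sub_comm.1 (X_pow_dvd_sub_trunc _ n)).trans (sub_dvd_pow_sub_pow _ _ 3)

lemma X_pow_dvd_padePoly_sub (a : ℤ) {j k n : ℕ} (hn : j + k < n) :
    Polynomial.X ^ (j + k + 1) ∣
      padePoly a k j - trunc n (cubicBinomSeries a) * padePoly (-a) j k := by
  rw [← X_pow_dvd_coe_iff, Polynomial.coe_sub, Polynomial.coe_mul, PowerSeries.X_pow_dvd_iff]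
  intro s hs
  rw [map_sub, Polynomial.coeff_coe, ← coeff_cubicBinomSeries_mul_padePoly a (by omega),
    ← map_sub, ← sub_mul]
  exact PowerSeries.X_pow_dvd_iff.1 ((X_pow_dvd_sub_trunc _ n).mul_right _) s (by omega)

end PowerSeries

lemma padePoly_mul_sub_mul (a : ℤ) (j k : ℕ) :
    padePoly a k j * padePoly (-a) (j + 1) k - padePoly a k (j + 1) * padePoly (-a) j k
      = Polynomial.monomial (k + (j + 1))
          (cubicBinomCoeff (3 * j + a) k * cubicBinomCoeff (3 * k - a) (j + 1)) := by
  set P := padePoly a k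
  set Q := fun j ↦ padePoly (-a) j k
  have hlow : Polynomial.X ^ (j + k + 1) ∣ P j * Q (j + 1) - P (j + 1) * Q j := by
    set T := PowerSeries.trunc (j + k + 2) (cubicBinomSeries a)
    have h₀ : Polynomial.X ^ (j + k + 1) ∣ P j - T * Q j := X_pow_dvd_padePoly_sub a (by omega)
    have h₁ : Polynomial.X ^ (j + 1 + k + 1) ∣ P (j + 1) - T * Q (j + 1) :=
      X_pow_dvd_padePoly_sub a (by omega)
    rw [show P j * Q (j + 1) - P (j + 1) * Q j
      = (P j - T * Q j) * Q (j + 1) - (P (j + 1) - T * Q (j + 1)) * Q j by ring]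
    exact dvd_sub (h₀.mul_right _) (((pow_dvd_pow _ (by omega)).trans h₁).mul_right _)
  have hdegree {j₁ j₂ : ℕ} : (P j₁ * Q j₂).natDegree ≤ k + j₂ :=
    Polynomial.natDegree_mul_le_of_le (natDegree_padePoly_le _ _ _) (natDegree_padePoly_le _ _ _)
  ext s
  rw [Polynomial.coeff_monomial]
  rcases lt_trichotomy s (k + (j + 1)) with h | rfl | h
  · rw [Polynomial.X_pow_dvd_iff.1 hlow s (by omega), if_neg (by omega)]
  · have hzero : (P (j + 1) * Q j).coeff (k + (j + 1)) = 0 :=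
      Polynomial.coeff_eq_zero_of_natDegree_lt (hdegree.trans_lt (by omega))
    rw [if_pos rfl, Polynomial.coeff_sub, hzero, Polynomial.coeff_mul_add_eq_of_natDegree_le
      (natDegree_padePoly_le _ _ _) (natDegree_padePoly_le _ _ _),
      coeff_padePoly_of_le _ _ le_rfl, coeff_padePoly_of_le _ _ le_rfl]
    simp [sub_eq_add_neg]
  · rw [Polynomial.coeff_sub, Polynomial.coeff_eq_zero_of_natDegree_lt (hdegree.trans_lt h),
      Polynomial.coeff_eq_zero_of_natDegree_lt (hdegree.trans_lt (by omega)), sub_zero,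
      if_neg (by omega)]

lemma eval_padePoly_det_ne_zero {a : ℤ} (ha : ¬ 3 ∣ a) (j k : ℕ) {w : ℤ} (hw : w ≠ 0) :
    (padePoly a k j).eval w * (padePoly (-a) (j + 1) k).eval w
      - (padePoly a k (j + 1)).eval w * (padePoly (-a) j k).eval w ≠ 0 := by
  rw [← Polynomial.eval_mul, ← Polynomial.eval_mul, ← Polynomial.eval_sub, padePoly_mul_sub_mul,
    Polynomial.eval_monomial]
  exact mul_ne_zero (mul_ne_zero (cubicBinomCoeff_ne_zero (by omega) _)
    (cubicBinomCoeff_ne_zero (by omega) _)) (pow_ne_zero _ hw)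

end PadeApproximants

section PadeBounds

open Finset

lemma abs_cubicBinomCoeff_le {m : ℤ} {N i : ℕ} (hNm : 3 * N - 6 ≤ m) (hmN : m ≤ 3 * N)
    (hi : i ≤ N) : |cubicBinomCoeff m i| ≤ 9 ^ i * N.choose i := by
  induction i with
  | zero => simp
  | succ i ih =>
    have hsucc : ((i : ℤ) + 1) * |cubicBinomCoeff m (i + 1)|
        = |3 * (3 * (i : ℤ) - m)| * |cubicBinomCoeff m i| := by
      rw [← abs_mul, ← succ_mul_cubicBinomCoeff_succ, abs_mul,
        abs_of_nonneg (by positivity : (0 : ℤ) ≤ i + 1)]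
    have hfactor : |3 * (3 * (i : ℤ) - m)| ≤ 9 * (N - i) := by
      rw [abs_le]
      constructor <;> omega
    have hchoose := Nat.choose_succ_right_eq N i
    zify [show i ≤ N by omega] at hchoose
    refine le_of_mul_le_mul_left ?_ (by positivity : (0 : ℤ) < i + 1)
    calc ((i : ℤ) + 1) * |cubicBinomCoeff m (i + 1)|
        ≤ 9 * (N - i) * (9 ^ i * N.choose i) := by
          rw [hsucc]
          exact mul_le_mul hfactor (ih (by omega)) (abs_nonneg _) (by omega)
      _ = (i + 1) * (9 ^ (i + 1) * N.choose (i + 1)) := by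
          rw [pow_succ]
          linear_combination -9 * 9 ^ i * hchoose

lemma abs_cubicBinomCoeff_add_mul_choose_le {m : ℤ} {N : ℕ} (hNm : 3 * N - 3 ≤ m)
    (hmN : m ≤ 3 * N) (r : ℕ) :
    |cubicBinomCoeff m (N + r)| * (N + r).choose N ≤ 9 ^ (N + r) := by
  induction r with
  | zero => simpa using abs_cubicBinomCoeff_le (by omega) hmN (le_refl N)
  | succ r ih =>
    set s := N + r
    have hsucc : ((s : ℤ) + 1) * |cubicBinomCoeff m (s + 1)|
        = |3 * (3 * (s : ℤ) - m)| * |cubicBinomCoeff m s| := by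
      rw [← abs_mul, ← succ_mul_cubicBinomCoeff_succ, abs_mul,
        abs_of_nonneg (by positivity : (0 : ℤ) ≤ s + 1)]
    have hfactor : |3 * (3 * (s : ℤ) - m)| ≤ 9 * (r + 1) := by
      rw [abs_le]
      constructor <;> omega
    have hchoose := Nat.choose_mul_succ_eq s N
    rw [show s + 1 - N = r + 1 by omega] at hchoose
    zify at hchoose
    refine le_of_mul_le_mul_left ?_ (by positivity : (0 : ℤ) < (s + 1) * (r + 1))
    calc ((s : ℤ) + 1) * (r + 1) * (|cubicBinomCoeff m (s + 1)| * (s + 1).choose N)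
        = |3 * (3 * (s : ℤ) - m)| * |cubicBinomCoeff m s| * (s.choose N * (s + 1)) := by
          rw [hchoose, ← hsucc]
          ring
      _ ≤ 9 * (r + 1) * |cubicBinomCoeff m s| * (s.choose N * (s + 1)) := by gcongr
      _ = 9 * ((s + 1) * (r + 1)) * (|cubicBinomCoeff m s| * s.choose N) := by ring
      _ ≤ 9 * ((s + 1) * (r + 1)) * 9 ^ s := by gcongr
      _ = (s + 1) * (r + 1) * 9 ^ (s + 1) := by ring

lemma abs_eval_padePoly_le_sum (a : ℤ) (j k : ℕ) {w : ℤ} (hw : 0 ≤ w) :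
    |(padePoly a j k).eval w|
      ≤ ∑ i ∈ range (j + 1),
          |cubicBinomCoeff (3 * k + a) i| * (j + k - i).choose k * w ^ i := by
  rw [padePoly, Polynomial.eval_finsetSum]
  refine (abs_sum_le_sum_abs _ _).trans_eq (sum_congr rfl fun i _ ↦ ?_)
  rw [Polynomial.eval_monomial, abs_mul, abs_mul, abs_pow, abs_of_nonneg hw, Nat.abs_cast]

lemma pow_mul_choose_le_succ_pow (c n k : ℕ) : c ^ k * n.choose k ≤ (c + 1) ^ n := by
  rcases lt_or_ge n k with h | h
  · simp [Nat.choose_eq_zero_of_lt h]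
  rw [add_pow]
  simpa using single_le_sum (f := fun i ↦ c ^ i * 1 ^ (n - i) * n.choose i)
    (fun _ _ ↦ Nat.zero_le _) (mem_range.2 (Nat.lt_succ_of_le h))

lemma abs_eval_padePoly_neg_le {a : ℤ} (ha₀ : 0 ≤ a) (ha₆ : a ≤ 6) {j k : ℕ} (hjk : j ≤ k)
    {w : ℤ} (hw : 2 ≤ w) :
    16 ^ k * |(padePoly (-a) j k).eval w| ≤ 34 ^ k * (9 * w) ^ j := by
  have hterm (i : ℕ) (hi : i ∈ range (j + 1)) :
      16 ^ k * (|cubicBinomCoeff (3 * k + -a) i| * (j + k - i).choose k * w ^ i)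
        ≤ k.choose i * (17 ^ k * (9 * w) ^ j) := by
    obtain ⟨l, rfl⟩ : ∃ l, j = i + l := Nat.exists_eq_add_of_le (mem_range_succ_iff.1 hi)
    have hcoeff : |cubicBinomCoeff (3 * k + -a) i| ≤ 9 ^ i * k.choose i :=
      abs_cubicBinomCoeff_le (by omega) (by omega) (by omega)
    have hchoose : (16 : ℤ) ^ k * (k + l).choose k ≤ 17 ^ k * (9 * w) ^ l := calc
      (16 : ℤ) ^ k * (k + l).choose k ≤ 17 ^ (k + l) := by
        exact_mod_cast pow_mul_choose_le_succ_pow 16 (k + l) k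
      _ ≤ 17 ^ k * (9 * w) ^ l := by
        rw [pow_add]
        gcongr
        omega
    rw [show i + l + k - i = k + l by omega]
    calc 16 ^ k * (|cubicBinomCoeff (3 * k + -a) i| * (k + l).choose k * w ^ i)
        = |cubicBinomCoeff (3 * k + -a) i| * (16 ^ k * (k + l).choose k) * w ^ i := by ring
      _ ≤ 9 ^ i * k.choose i * (17 ^ k * (9 * w) ^ l) * w ^ i := by gcongr
      _ = k.choose i * (17 ^ k * (9 * w) ^ (i + l)) := by rw [pow_add, mul_pow 9 w i]; ring
  calc 16 ^ k * |(padePoly (-a) j k).eval w|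
      ≤ ∑ i ∈ range (j + 1), (k.choose i : ℤ) * (17 ^ k * (9 * w) ^ j) := by
        refine (mul_le_mul_of_nonneg_left (abs_eval_padePoly_le_sum _ _ _ (by omega))
          (by positivity)).trans ?_
        rw [mul_sum]
        exact sum_le_sum hterm
    _ ≤ ∑ i ∈ range (k + 1), (k.choose i : ℤ) * (17 ^ k * (9 * w) ^ j) :=
        sum_le_sum_of_subset_of_nonneg (range_mono (by omega)) fun i _ _ ↦ by positivity
    _ = 34 ^ k * (9 * w) ^ j := by
        have hsum : ∑ i ∈ range (k + 1), (k.choose i : ℤ) = 2 ^ k := by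
          exact_mod_cast Nat.sum_range_choose k
        rw [← sum_mul, hsum, ← mul_assoc, ← mul_pow]
        norm_num

lemma abs_cubicBinomCoeff_mul_choose_le {a : ℤ} (ha₀ : 0 ≤ a) (ha₃ : a ≤ 3) {j s l : ℕ}
    (hjk : 2 * j + 1 ≤ s + l) :
    |cubicBinomCoeff (3 * j + a) s| * (l + j).choose j ≤ 9 ^ s * 8 ^ l := by
  have hchoose : (l + j).choose j ≤ (2 : ℤ) ^ (l + j) := by
    exact_mod_cast Nat.choose_le_two_pow (l + j) j
  have htwo {m : ℕ} (hm : m ≤ 3 * l) : (2 : ℤ) ^ m ≤ 8 ^ l := by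
    rw [show (8 : ℤ) = 2 ^ 3 by norm_num, ← pow_mul]
    exact pow_le_pow_right₀ (by norm_num) hm
  rcases le_or_gt s j with hsj | hjs
  · have hcoeff : |cubicBinomCoeff (3 * j + a) s| ≤ 9 ^ s * 2 ^ (j + 1) :=
      (abs_cubicBinomCoeff_le (N := j + 1) (by omega) (by omega) (by omega)).trans
        (by gcongr; exact_mod_cast Nat.choose_le_two_pow (j + 1) s)
    calc |cubicBinomCoeff (3 * j + a) s| * (l + j).choose j
        ≤ 9 ^ s * 2 ^ (j + 1) * 2 ^ (l + j) := by gcongr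
      _ = 9 ^ s * 2 ^ (j + 1 + (l + j)) := by ring
      _ ≤ 9 ^ s * 8 ^ l := by gcongr; exact htwo (by omega)
  · obtain ⟨r, rfl⟩ : ∃ r, s = j + 1 + r := Nat.exists_eq_add_of_le hjs
    have hcoeff := abs_cubicBinomCoeff_add_mul_choose_le (m := 3 * j + a) (N := j + 1)
      (by omega) (by omega) r
    rcases le_or_gt l r with hlr | hrl
    · have hmono : (l + j).choose j ≤ (j + 1 + r).choose (j + 1) := calc
        (l + j).choose j ≤ (l + j + 1).choose (j + 1) := by
          rw [Nat.choose_succ_succ]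
          omega
        _ ≤ (j + 1 + r).choose (j + 1) := Nat.choose_le_choose _ (by omega)
      calc |cubicBinomCoeff (3 * j + a) (j + 1 + r)| * (l + j).choose j
          ≤ |cubicBinomCoeff (3 * j + a) (j + 1 + r)| * (j + 1 + r).choose (j + 1) := by gcongr
        _ ≤ 9 ^ (j + 1 + r) * 8 ^ l := hcoeff.trans
            (le_mul_of_one_le_right (by positivity) (one_le_pow₀ (by norm_num)))
    · have hpos : 1 ≤ ((j + 1 + r).choose (j + 1) : ℤ) := by
        exact_mod_cast Nat.choose_pos (by omega)
      gcongr
      · exact (le_mul_of_one_le_right (abs_nonneg _) hpos).trans hcoeff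
      · exact hchoose.trans (htwo (by omega))

lemma abs_eval_padePoly_le {a : ℤ} (ha₀ : 0 ≤ a) (ha₃ : a ≤ 3) {j k : ℕ} (hjk : 2 * j + 1 ≤ k)
    {w : ℤ} (hw : 2 ≤ w) : |(padePoly a k j).eval w| ≤ 2 * (9 * w) ^ k := by
  have hterm (i : ℕ) (hi : i ∈ range (k + 1)) :
      |cubicBinomCoeff (3 * j + a) i| * (k + j - i).choose j * w ^ i
        ≤ (9 * w) ^ i * 8 ^ (k - i) := by
    rw [mem_range_succ_iff] at hi
    rw [show k + j - i = k - i + j by omega, mul_pow, mul_right_comm (9 ^ i)]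
    exact mul_le_mul_of_nonneg_right
      (abs_cubicBinomCoeff_mul_choose_le ha₀ ha₃ (by omega)) (by positivity)
  refine (abs_eval_padePoly_le_sum a k j (by omega)).trans ((sum_le_sum hterm).trans ?_)
  have hgeom : (∑ i ∈ range (k + 1), (9 * w) ^ i * 8 ^ (k - i)) * (9 * w - 8)
      = (9 * w) ^ (k + 1) - 8 ^ (k + 1) := geom_sum₂_mul (9 * w) 8 (k + 1)
  refine le_of_mul_le_mul_right ?_ (by omega : 0 < 9 * w - 8)
  calc (∑ i ∈ range (k + 1), (9 * w) ^ i * 8 ^ (k - i)) * (9 * w - 8)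
      ≤ (9 * w) ^ k * (9 * w) := by
        rw [hgeom, pow_succ]
        exact sub_le_self _ (by positivity)
    _ ≤ (9 * w) ^ k * (2 * (9 * w - 8)) := mul_le_mul_of_nonneg_left (by omega) (by positivity)
    _ = 2 * (9 * w) ^ k * (9 * w - 8) := by ring

end PadeBounds

section DepressedCubic

/-- The monic integer cubic with root `M = (N - 1) * w + N * g` whenever
`1 + w ^ 3 = N * (g + w) ^ 3`; the substitution removes the quadratic term of the equation
for `w`. -/
def depressedCubic (N g M : ℤ) : ℤ :=
  M ^ 3 - 3 * N * g ^ 2 * M + N * (N + 1) * g ^ 3 - (N - 1) ^ 2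

lemma pow_dvd_sub_of_pow_dvd_cube_sub_cube {x y : ℤ} {s : ℕ} (hx : 3 ∣ x - 1) (hy : 3 ∣ y - 1)
    (h : 3 ^ (s + 1) ∣ x ^ 3 - y ^ 3) : 3 ^ s ∣ x - y := by
  obtain ⟨a, ha⟩ := hx
  obtain ⟨c, hc⟩ := hy
  obtain rfl : x = 1 + 3 * a := by linarith
  obtain rfl : y = 1 + 3 * c := by linarith
  set r := a + c + a ^ 2 + a * c + c ^ 2 with hr
  rw [show (1 + 3 * a) ^ 3 - (1 + 3 * c) ^ 3 = 3 * ((1 + 3 * a - (1 + 3 * c)) * (1 + 3 * r)) by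
    rw [hr]; ring, pow_succ'] at h
  have hcop : IsCoprime ((3 : ℤ) ^ s) (1 + 3 * r) := IsCoprime.pow_left ⟨-r, 1, by ring⟩
  exact hcop.dvd_of_dvd_mul_right (Int.dvd_of_mul_dvd_mul_left (by norm_num) h)

lemma three_dvd_sub_one_of_depressedCubic_eq_zero {N g M : ℤ} (hN : 3 ∣ N)
    (h : depressedCubic N g M = 0) : 3 ∣ M - 1 := by
  obtain ⟨c, rfl⟩ := hN
  have hcube : 3 ∣ M ^ 3 - 1 :=
    ⟨3 * c * g ^ 2 * M - c * (3 * c + 1) * g ^ 3 + 3 * c ^ 2 - 2 * c, by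
      rw [depressedCubic] at h
      linear_combination h⟩
  have hfermat : M ^ 3 ≡ M [ZMOD 3] := by
    have := ZMod.pow_card (p := 3) (M : ZMod 3)
    exact (ZMod.intCast_eq_intCast_iff _ _ 3).1 (by exact_mod_cast this)
  have := hfermat.dvd
  omega

lemma nine_pow_dvd_sub_of_depressedCubic_eq_zero {b d c : ℕ} {M t : ℤ} (hb : b ≠ 0) (hd : d ≠ 0)
    (h : depressedCubic (9 ^ b) (9 ^ d) M = 0) (hc : c ≤ b + 2 * d) (ht : 3 ∣ t - 1)
    (htc : 3 * 9 ^ c ∣ t ^ 3 - (1 - 9 ^ b) ^ 2) : 9 ^ c ∣ M - t := by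
  have hM : 3 ∣ M - 1 :=
    three_dvd_sub_one_of_depressedCubic_eq_zero (dvd_pow (by norm_num) hb) h
  have hc₃ : (9 : ℤ) ^ c = 3 ^ (2 * c) := by rw [pow_mul]; norm_num
  have hlinear : 3 * 9 ^ c ∣ 3 * ((9 : ℤ) ^ b * (9 ^ d) ^ 2) := by
    rw [← pow_mul, ← pow_add]
    exact mul_dvd_mul_left 3 (pow_dvd_pow 9 (by omega))
  have hconst : 3 * 9 ^ c ∣ (9 : ℤ) ^ b * (9 ^ d) ^ 3 := by
    refine (mul_dvd_mul_right (by norm_num : (3 : ℤ) ∣ 9) _).trans ?_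
    rw [← pow_succ', ← pow_mul, ← pow_add]
    exact pow_dvd_pow 9 (by omega)
  rw [hc₃] at htc hlinear hconst ⊢
  refine pow_dvd_sub_of_pow_dvd_cube_sub_cube hM ht ?_
  rw [pow_succ', show M ^ 3 - t ^ 3 = 3 * (9 ^ b * (9 ^ d) ^ 2) * M
      - 9 ^ b * (9 ^ d) ^ 3 * (9 ^ b + 1) - (t ^ 3 - (1 - 9 ^ b) ^ 2) by
    rw [depressedCubic] at h
    linear_combination h]
  exact dvd_sub (dvd_sub (hlinear.mul_right _) (hconst.mul_right _)) htc

lemma neg_of_depressedCubic_sq_eq_zero {r g M : ℤ} (hr : 3 ≤ r) (hg : 2 ≤ g)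
    (h : depressedCubic (r ^ 2) g M = 0) : M < 0 := by
  rw [depressedCubic] at h
  by_contra! hM
  have hfactor : 0 ≤ (M - r * g) ^ 2 * (M + 2 * r * g) := by positivity
  have hg₃ : 2 ^ 3 ≤ g ^ 3 := by gcongr
  have hgap : 0 < r ^ 2 * g ^ 3 - (r + 1) ^ 2 := by nlinarith
  have hr₁ : 0 < (r - 1) ^ 2 := pow_pos (by linarith) 2
  have hprod : (r - 1) ^ 2 * (r ^ 2 * g ^ 3 - (r + 1) ^ 2) ≤ 0 := by nlinarith
  exact hprod.not_gt (mul_pos hr₁ hgap)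

lemma neg_le_of_depressedCubic_eq_zero {E g M : ℤ} (hE : 1 ≤ E) (hg : 1 ≤ g)
    (h : depressedCubic (9 * E ^ 3) g M = 0) : -(7 * (E ^ 2 * g)) ≤ M := by
  rw [depressedCubic] at h
  by_contra! hlt
  set A := E ^ 2 * g with hA
  have hA₀ : 0 < A := by positivity
  have hE₃ : 1 ≤ E ^ 3 := one_le_pow₀ hE
  have hlinear : 27 * (E ^ 3 * g ^ 2) ≤ 27 * A ^ 2 := by
    rw [hA, mul_pow, ← pow_mul]
    gcongr
    norm_num
  have hconst : 9 * E ^ 3 * (9 * E ^ 3 + 1) * g ^ 3 ≤ 90 * A ^ 3 := by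
    have : 0 ≤ 9 * E ^ 3 * g ^ 3 * (E ^ 3 - 1) := mul_nonneg (by positivity) (by linarith)
    rw [hA]
    linear_combination this
  have hsq : 49 * A ^ 2 ≤ M ^ 2 := by nlinarith
  have hcube : 7 * A * (22 * A ^ 2) ≤ -M * (M ^ 2 - 27 * (E ^ 3 * g ^ 2)) :=
    mul_le_mul (by linarith) (by linarith) (by positivity) (by linarith)
  have : 0 < A ^ 3 := by positivity
  nlinarith [sq_nonneg (9 * E ^ 3 - 1)]

section NinePow

variable {e d : ℕ} {M : ℤ}

lemma depressedCubic_root_neg (hd : d ≠ 0) (h : depressedCubic (9 ^ (3 * e + 1)) (9 ^ d) M = 0) :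
    M < 0 := by
  rw [show (9 : ℤ) = 3 ^ 2 by norm_num, pow_right_comm 3 2 (3 * e + 1)] at h
  refine neg_of_depressedCubic_sq_eq_zero ?_ ?_ h
  · exact le_self_pow₀ (by norm_num) (by omega)
  · exact le_trans (by norm_num) (le_self_pow₀ (by norm_num) hd)

lemma abs_depressedCubic_root_le (hd : d ≠ 0)
    (h : depressedCubic (9 ^ (3 * e + 1)) (9 ^ d) M = 0) : |M| ≤ 7 * 9 ^ (2 * e + d) := by
  have hlower := neg_le_of_depressedCubic_eq_zero (E := 9 ^ e) (g := 9 ^ d) (M := M)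
    (one_le_pow₀ (by norm_num)) (one_le_pow₀ (by norm_num))
    (by rwa [← pow_mul, mul_comm e 3, ← pow_succ'])
  rw [abs_of_neg (depressedCubic_root_neg hd h), pow_add, mul_comm 2 e, pow_mul]
  linarith

lemma depressedCubic_root_eq {s c : ℕ} {t : ℤ} (hd : d ≠ 0)
    (h : depressedCubic (9 ^ (3 * e + 1)) (9 ^ d) M = 0) (ht : 3 ∣ t - 1)
    (htc : 3 * 9 ^ c ∣ t ^ 3 - (1 - 9 ^ (3 * e + 1)) ^ 2) (hts : |t| ≤ 10 * 9 ^ s)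
    (hc : c ≤ 3 * e + 1 + 2 * d) (hMc : 2 * e + d + 1 ≤ c) (hsc : s + 2 ≤ c) : M = t := by
  have hdvd : 9 ^ c ∣ M - t :=
    nine_pow_dvd_sub_of_depressedCubic_eq_zero (Nat.succ_ne_zero _) hd h hc ht htc
  refine sub_eq_zero.1 (Int.eq_zero_of_abs_lt_dvd hdvd ?_)
  have hM := abs_depressedCubic_root_le hd h
  have hMc' : (9 : ℤ) ^ (2 * e + d + 1) ≤ 9 ^ c := pow_le_pow_right₀ (by norm_num) hMc
  have hsc' : (9 : ℤ) ^ (s + 2) ≤ 9 ^ c := pow_le_pow_right₀ (by norm_num) hsc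
  have hc₀ : (0 : ℤ) < 9 ^ c := by positivity
  rw [pow_succ] at hMc'
  rw [pow_add] at hsc'
  linarith [abs_sub M t]

lemma depressedCubic_nine_ne_zero (hd : d ≠ 0) : depressedCubic 9 (9 ^ d) M ≠ 0 := by
  intro h
  have h' : depressedCubic (9 ^ (3 * 0 + 1)) (9 ^ d) M = 0 := by simpa using h
  have hM : M = 4 := depressedCubic_root_eq (s := 0) (c := 1 + 2 * d) hd h' (by norm_num)
    (by norm_num) (by norm_num) (by omega) (by omega) (by omega)
  linarith [depressedCubic_root_neg hd h']

lemma depressedCubic_linear_ne_zero {w g : ℤ} (hw : 9 ≤ w) (hg : 9 ≤ g)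
    (hgap : 9 * w ≤ g ^ 3 ∨ g ^ 3 ≤ w) : depressedCubic (9 * w) g (1 - 6 * w) ≠ 0 := by
  intro h
  have hred : 3 * w * (8 * w - 1) = 3 * g ^ 2 * (6 * w - 1) + (9 * w + 1) * g ^ 3 := by
    refine mul_left_cancel₀ (show 9 * w ≠ 0 by linarith) ?_
    rw [depressedCubic] at h
    linear_combination -h
  have hg₂ : 9 * g ^ 2 ≤ g ^ 3 := by nlinarith [sq_nonneg g]
  have hwg₂ : 0 < w * g ^ 2 := by positivity
  rcases hgap with hle | hle <;> nlinarith [sq_nonneg g]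

lemma depressedCubic_quadratic_ne_zero {w g : ℤ} (hw : 9 ≤ w) (hgw : 729 * w ^ 4 ≤ g ^ 3) :
    depressedCubic (9 * w) g (1 - 6 * w - 9 * w ^ 2) ≠ 0 := by
  intro h
  have hred : 3 * g ^ 2 * (9 * w ^ 2 + 6 * w - 1) + (9 * w + 1) * g ^ 3
      = 3 * w ^ 2 * (27 * w ^ 3 + 54 * w ^ 2 + 27 * w - 4) := by
    refine mul_left_cancel₀ (show 9 * w ≠ 0 by linarith) ?_
    rw [depressedCubic] at h
    linear_combination h
  have hpos : 0 ≤ 3 * g ^ 2 * (9 * w ^ 2 + 6 * w - 1) :=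
    mul_nonneg (by positivity) (by nlinarith)
  have hleft : (9 * w + 1) * (729 * w ^ 4) ≤ (9 * w + 1) * g ^ 3 := by gcongr
  have hright : 3 * w ^ 2 * (27 * w ^ 3 + 54 * w ^ 2 + 27 * w - 4) ≤ 3 * w ^ 2 * (81 * w ^ 3) := by
    gcongr
    nlinarith
  have hw₅ : 0 < w ^ 5 := by positivity
  have hw₄ : 0 < w ^ 4 := by positivity
  nlinarith

lemma depressedCubic_ne_zero_of_le_four_mul (hd : d ≠ 0) (hde : d ≤ 4 * e) :
    depressedCubic (9 ^ (3 * e + 1)) (9 ^ d) M ≠ 0 := by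
  intro h
  have hw : (9 : ℤ) ≤ 9 ^ (3 * e) := le_self_pow₀ (by norm_num) (by omega)
  have hM : M = 1 - 6 * 9 ^ (3 * e) := by
    refine depressedCubic_root_eq (s := 3 * e) (c := min (6 * e + 1) (3 * e + 1 + 2 * d)) hd h
      ⟨-2 * 9 ^ (3 * e), by ring⟩ ?_ (abs_le.2 ⟨by linarith, by linarith⟩)
      (by omega) (by omega) (by omega)
    refine (mul_dvd_mul_left 3 (pow_dvd_pow 9 (min_le_left _ _))).trans ⟨1 - 8 * 9 ^ (3 * e), ?_⟩
    rw [show 6 * e + 1 = 3 * e + 3 * e + 1 by ring]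
    ring
  rw [pow_succ', hM] at h
  refine depressedCubic_linear_ne_zero hw (le_self_pow₀ (by norm_num) hd) ?_ h
  rw [← pow_succ', ← pow_mul]
  rcases lt_or_ge (3 * e) (d * 3) with hlt | hge
  · exact .inl (pow_le_pow_right₀ (by norm_num) hlt)
  · exact .inr (pow_le_pow_right₀ (by norm_num) hge)

lemma depressedCubic_ne_zero_of_le_seven_mul (hd : 4 * e < d) (hde : d ≤ 7 * e) :
    depressedCubic (9 ^ (3 * e + 1)) (9 ^ d) M ≠ 0 := by
  intro h
  have hw : (9 : ℤ) ≤ 9 ^ (3 * e) := le_self_pow₀ (by norm_num) (by omega)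
  have hM : M = 1 - 6 * 9 ^ (3 * e) - 9 * (9 ^ (3 * e)) ^ 2 := by
    refine depressedCubic_root_eq (s := 6 * e) (c := min (9 * e + 1) (3 * e + 1 + 2 * d))
      (by omega) h ⟨-2 * 9 ^ (3 * e) - 3 * (9 ^ (3 * e)) ^ 2, by ring⟩ ?_ ?_
      (by omega) (by omega) (by omega)
    · refine (mul_dvd_mul_left 3 (pow_dvd_pow 9 (min_le_left _ _))).trans
        ⟨4 - 27 * 9 ^ (3 * e) - 54 * (9 ^ (3 * e)) ^ 2 - 27 * (9 ^ (3 * e)) ^ 3, ?_⟩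
      rw [show 9 * e + 1 = 3 * e + 3 * e + 3 * e + 1 by ring]
      ring
    · rw [show 6 * e = 3 * e + 3 * e by ring, pow_add]
      exact abs_le.2 ⟨by nlinarith, by nlinarith⟩
  rw [pow_succ', hM] at h
  refine depressedCubic_quadratic_ne_zero hw ?_ h
  rw [show (729 : ℤ) = 9 ^ 3 by norm_num, ← pow_mul, ← pow_mul, ← pow_add]
  exact pow_le_pow_right₀ (by norm_num) (by omega)

lemma depressedCubic_ne_zero_of_forall_not_dvd {N g : ℤ} {p : ℕ} (hp : p ≠ 0)
    (hno : ∀ m < p, ¬ (p : ℤ) ∣ depressedCubic N g m) : depressedCubic N g M ≠ 0 := by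
  intro h
  have hmod : 0 ≤ M % p := Int.emod_nonneg M (by exact_mod_cast hp)
  obtain ⟨m, hm⟩ := Int.eq_ofNat_of_zero_le hmod
  have hlt : M % p < p := Int.emod_lt_of_pos M (by omega)
  have hcongr : depressedCubic N g m ≡ depressedCubic N g M [ZMOD p] := by
    have : (m : ℤ) ≡ M [ZMOD p] := hm ▸ Int.mod_modEq M p
    rw [depressedCubic, depressedCubic]
    gcongr
  exact hno m (by omega) (Int.modEq_zero_iff_dvd.1 (h ▸ hcongr))

lemma exists_modulus_not_dvd_depressedCubic :
    (∀ d < 101, 7 < d → ∃ p < (90 : ℕ), p ≠ 0 ∧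
      ∀ m < p, ¬ (p : ℤ) ∣ depressedCubic (9 ^ 4) (9 ^ d) m) ∧
    (∀ d < 25, 14 < d → ∃ p < (80 : ℕ), p ≠ 0 ∧
      ∀ m < p, ¬ (p : ℤ) ∣ depressedCubic (9 ^ 7) (9 ^ d) m) := by
  simp only [depressedCubic]
  decide +kernel

lemma dvd_eval_trunc_cubicBinomSeries_sub_one (a : ℤ) (n : ℕ) (w : ℤ) :
    w ∣ (PowerSeries.trunc (n + 1) (cubicBinomSeries a)).eval w - 1 := by
  have hcoeff : (PowerSeries.trunc (n + 1) (cubicBinomSeries a)).eval 0 = 1 := by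
    simp [← Polynomial.coeff_zero_eq_eval_zero, PowerSeries.coeff_trunc, coeff_cubicBinomSeries,
      cubicBinomCoeff_zero]
  simpa [hcoeff] using
    (PowerSeries.trunc (n + 1) (cubicBinomSeries a)).sub_dvd_eval_sub w 0

lemma nine_pow_dvd_mul_eval_padePoly_sub {j k : ℕ} (he : e ≠ 0) (hd : d ≠ 0)
    (h : depressedCubic (9 ^ (3 * e + 1)) (9 ^ d) M = 0)
    (hjk : 3 * e + 1 + 2 * d ≤ 3 * e * (j + k + 1)) :
    9 ^ (3 * e + 1 + 2 * d) ∣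
      M * (padePoly (-2) j k).eval (9 ^ (3 * e)) - (padePoly 2 k j).eval (9 ^ (3 * e)) := by
  set w : ℤ := 9 ^ (3 * e) with hw
  set T := PowerSeries.trunc (j + k + 2) (cubicBinomSeries 2)
  have hpade : w ^ (j + k + 1) ∣
      (padePoly 2 k j).eval w - T.eval w * (padePoly (-2) j k).eval w := by
    simpa using map_dvd (Polynomial.evalRingHom w)
      (X_pow_dvd_padePoly_sub 2 (show j + k < j + k + 2 by omega))
  have hcube : w ^ (j + k + 2) ∣ T.eval w ^ 3 - (1 - 9 ^ (3 * e + 1)) ^ 2 := by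
    simpa [pow_succ', ← hw] using map_dvd (Polynomial.evalRingHom w)
      (X_pow_dvd_trunc_cubicBinomSeries_cube_sub 2 (j + k + 2))
  have hT₃ : 3 ∣ T.eval w - 1 :=
    (dvd_pow (by norm_num) (by omega)).trans (dvd_eval_trunc_cubicBinomSeries_sub_one 2 _ w)
  have hMT : 9 ^ (3 * e + 1 + 2 * d) ∣ M - T.eval w := by
    refine nine_pow_dvd_sub_of_depressedCubic_eq_zero (by omega) hd h le_rfl hT₃
      (dvd_trans ?_ hcube)
    refine (mul_dvd_mul_right (by norm_num : (3 : ℤ) ∣ 9) _).trans ?_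
    rw [← pow_succ', hw, ← pow_mul]
    refine pow_dvd_pow 9 ?_
    rw [show 3 * e * (j + k + 2) = 3 * e * (j + k + 1) + 3 * e by ring]
    omega
  rw [hw, ← pow_mul, ← hw] at hpade
  rw [show M * (padePoly (-2) j k).eval w - (padePoly 2 k j).eval w
      = (M - T.eval w) * (padePoly (-2) j k).eval w
        - ((padePoly 2 k j).eval w - T.eval w * (padePoly (-2) j k).eval w) by ring]
  exact dvd_sub (hMT.mul_right _) ((pow_dvd_pow 9 hjk).trans hpade)

lemma two_mul_abs_mul_eval_padePoly_le {j k : ℕ} (he : e ≠ 0) (hd : d ≠ 0)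
    (h : depressedCubic (9 ^ (3 * e + 1)) (9 ^ d) M = 0) (hjk : j ≤ k) (hk : 2 ≤ k)
    (hden : k + 2 * (3 * e + 1) * j ≤ 2 * e + 2 * d) :
    2 * |M * (padePoly (-2) j k).eval (9 ^ (3 * e))| ≤ 9 ^ (3 * e + 1 + 2 * d) := by
  set w : ℤ := 9 ^ (3 * e) with hw
  have hw₂ : 2 ≤ w := le_trans (by norm_num) (le_self_pow₀ (by norm_num) (by omega : 3 * e ≠ 0))
  have hQ := abs_eval_padePoly_neg_le (a := 2) (by norm_num) (by norm_num) hjk hw₂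
  have hexp : 9 * 3 ^ k * 9 ^ (2 * e + d) * (9 * w) ^ j ≤ (9 : ℤ) ^ (3 * e + 1 + 2 * d) := by
    rw [hw, ← pow_succ', show (9 : ℤ) = 3 ^ 2 by norm_num]
    simp only [← pow_mul, ← pow_add]
    refine pow_le_pow_right₀ (by norm_num) ?_
    omega
  have hconst : 14 * 34 ^ k ≤ 9 * 3 ^ k * (16 : ℤ) ^ k := by
    obtain ⟨k, rfl⟩ := Nat.exists_eq_add_of_le' hk
    rw [mul_assoc, ← mul_pow, pow_add, pow_add]
    have : (34 : ℤ) ^ k ≤ (3 * 16) ^ k := by gcongr; norm_num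
    have : (0 : ℤ) ≤ 34 ^ k := by positivity
    linarith
  refine le_of_mul_le_mul_left ?_ (show (0 : ℤ) < 16 ^ k by positivity)
  calc 16 ^ k * (2 * |M * (padePoly (-2) j k).eval w|)
      = 2 * |M| * (16 ^ k * |(padePoly (-2) j k).eval w|) := by rw [abs_mul]; ring
    _ ≤ 2 * (7 * 9 ^ (2 * e + d)) * (34 ^ k * (9 * w) ^ j) := by
        gcongr
        exact abs_depressedCubic_root_le hd h
    _ = 14 * 34 ^ k * (9 ^ (2 * e + d) * (9 * w) ^ j) := by ring
    _ ≤ 9 * 3 ^ k * 16 ^ k * (9 ^ (2 * e + d) * (9 * w) ^ j) := by gcongr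
    _ = 16 ^ k * (9 * 3 ^ k * 9 ^ (2 * e + d) * (9 * w) ^ j) := by ring
    _ ≤ 16 ^ k * 9 ^ (3 * e + 1 + 2 * d) := by gcongr

lemma mul_eval_padePoly_sub_eq_zero {j k : ℕ} (he : e ≠ 0) (hd : d ≠ 0)
    (h : depressedCubic (9 ^ (3 * e + 1)) (9 ^ d) M = 0) (hjk : 2 * j + 1 ≤ k) (hk : 2 ≤ k)
    (hnum : k * (3 * e + 1) ≤ 2 * d + 3 * e) (hden : k + 2 * (3 * e + 1) * j ≤ 2 * e + 2 * d)
    (horder : 3 * e + 1 + 2 * d ≤ 3 * e * (j + k + 1)) :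
    M * (padePoly (-2) j k).eval (9 ^ (3 * e)) - (padePoly 2 k j).eval (9 ^ (3 * e)) = 0 := by
  refine Int.eq_zero_of_abs_lt_dvd (nine_pow_dvd_mul_eval_padePoly_sub he hd h horder) ?_
  have hw₂ : (2 : ℤ) ≤ 9 ^ (3 * e) :=
    le_trans (by norm_num) (le_self_pow₀ (by norm_num) (by omega : 3 * e ≠ 0))
  have hQ := two_mul_abs_mul_eval_padePoly_le he hd h (by omega) hk hden
  have hP := abs_eval_padePoly_le (a := 2) (by norm_num) (by norm_num) hjk hw₂
  have hpow : 9 * (9 * 9 ^ (3 * e)) ^ k ≤ (9 : ℤ) ^ (3 * e + 1 + 2 * d) := by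
    rw [← pow_succ', ← pow_mul, ← pow_succ', mul_comm _ k]
    exact pow_le_pow_right₀ (by norm_num) (by omega)
  have hpos : (0 : ℤ) < 9 ^ (3 * e + 1 + 2 * d) := by positivity
  linarith [abs_sub (M * (padePoly (-2) j k).eval (9 ^ (3 * e)))
    ((padePoly 2 k j).eval (9 ^ (3 * e)))]

lemma exists_padePoly_orders (he : e ≠ 0) (hde : 7 * e < d) (h₁ : e = 1 → 101 ≤ d)
    (h₂ : e = 2 → 25 ≤ d) :
    ∃ j k : ℕ, 2 * (j + 1) + 1 ≤ k ∧ k * (3 * e + 1) ≤ 2 * d + 3 * e ∧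
      k + 2 * (3 * e + 1) * (j + 1) ≤ 2 * e + 2 * d ∧
      3 * e + 1 + 2 * d ≤ 3 * e * (j + k + 1) := by
  obtain ⟨q, hq⟩ : ∃ q, q = (2 * d - 1) / (3 * e + 1) := ⟨_, rfl⟩
  have hq_lt : q * (3 * e + 1) < 2 * d := by
    have := Nat.div_mul_le_self (2 * d - 1) (3 * e + 1)
    rw [← hq] at this
    omega
  have hq_le : 2 * d ≤ (q + 1) * (3 * e + 1) := by
    have := Nat.lt_div_mul_add (a := 2 * d - 1) (b := 3 * e + 1) (by omega)
    rw [← hq, ← Nat.add_one_mul] at this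
    omega
  obtain ⟨s, hs⟩ : ∃ s, s = (q + 1) / (3 * e) := ⟨_, rfl⟩
  have hs_le : s * (3 * e) ≤ q + 1 := hs ▸ Nat.div_mul_le_self _ _
  have hs_lt : q + 1 < (s + 1) * (3 * e) := by
    rw [Nat.add_one_mul, hs]
    exact Nat.lt_div_mul_add (by omega)
  clear hq hs
  refine ⟨s + 1, q + 1, ?_⟩
  rcases lt_or_ge e 3 with he₃ | he₃
  · interval_cases e <;> omega
  · have hq₄ : 4 ≤ q := by
      by_contra! hlt
      interval_cases q <;> omega
    have hs₉ : s * 9 ≤ q + 1 := by nlinarith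
    refine ⟨by omega, by nlinarith, ?_, by nlinarith⟩
    rcases Nat.eq_zero_or_pos s with rfl | hs₀
    · nlinarith
    · nlinarith [Nat.mul_le_mul he₃ (show 8 ≤ q by omega)]

lemma depressedCubic_ne_zero_of_seven_mul_lt (he : e ≠ 0) (hde : 7 * e < d) (h₁ : e = 1 → 101 ≤ d)
    (h₂ : e = 2 → 25 ≤ d) : depressedCubic (9 ^ (3 * e + 1)) (9 ^ d) M ≠ 0 := by
  intro h
  obtain ⟨j, k, hjk, hnum, hden, horder⟩ := exists_padePoly_orders he hde h₁ h₂
  have hj := mul_eval_padePoly_sub_eq_zero he (by omega) h (j := j) (by omega) (by omega) hnum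
    ((Nat.add_le_add_left (Nat.mul_le_mul_left _ j.le_succ) k).trans hden) horder
  have hj' := mul_eval_padePoly_sub_eq_zero he (by omega) h hjk (by omega) hnum hden
    (horder.trans (Nat.mul_le_mul_left _ (by omega)))
  refine eval_padePoly_det_ne_zero (a := 2) (by norm_num) j k
    (pow_ne_zero (3 * e) (by norm_num : (9 : ℤ) ≠ 0)) ?_
  linear_combination (padePoly (-2) j k).eval (9 ^ (3 * e)) * hj'
    - (padePoly (-2) (j + 1) k).eval (9 ^ (3 * e)) * hj

lemma depressedCubic_nine_pow_ne_zero (hd : d ≠ 0) :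
    depressedCubic (9 ^ (3 * e + 1)) (9 ^ d) M ≠ 0 := by
  rcases eq_or_ne e 0 with rfl | he
  · simpa using depressedCubic_nine_ne_zero hd
  rcases le_or_gt d (4 * e) with hd₄ | hd₄
  · exact depressedCubic_ne_zero_of_le_four_mul hd hd₄
  rcases le_or_gt d (7 * e) with hd₇ | hd₇
  · exact depressedCubic_ne_zero_of_le_seven_mul hd₄ hd₇
  by_cases h₁ : e = 1 ∧ d < 101
  · obtain ⟨rfl, hd'⟩ := h₁
    obtain ⟨p, -, hp, hno⟩ := exists_modulus_not_dvd_depressedCubic.1 d hd' hd₇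
    exact depressedCubic_ne_zero_of_forall_not_dvd hp hno
  by_cases h₂ : e = 2 ∧ d < 25
  · obtain ⟨rfl, hd'⟩ := h₂
    obtain ⟨p, -, hp, hno⟩ := exists_modulus_not_dvd_depressedCubic.2 d hd' hd₇
    exact depressedCubic_ne_zero_of_forall_not_dvd hp hno
  · exact depressedCubic_ne_zero_of_seven_mul_lt he hd₇ (by omega) (by omega)

end NinePow

end DepressedCubic

section CubicDescent

variable {R : Type*} [CommRing R] {η a b c : R}

lemma cube_add_cube_eq_mul (hη : η ^ 2 + η + 1 = 0) (a b : R) :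
    a ^ 3 + b ^ 3 = (a + b) * (a + η * b) * (a + η ^ 2 * b) := by
  linear_combination (-(a ^ 2 * b) - a * b ^ 2 * η - b ^ 3 * (η - 1)) * hη

lemma cube_eq_one_of_sq_add_self_add_one (hη : η ^ 2 + η + 1 = 0) : η ^ 3 = 1 := by
  linear_combination (η - 1) * hη

lemma isUnit_of_sq_add_self_add_one (hη : η ^ 2 + η + 1 = 0) : IsUnit η :=
  IsUnit.of_pow_eq_one (cube_eq_one_of_sq_add_self_add_one hη) three_ne_zero

lemma dvd_add_mul_of_dvd_add (h : η - 1 ∣ a + b) : η - 1 ∣ a + η * b :=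
  (show a + η * b = a + b + (η - 1) * b by ring) ▸ h.add (dvd_mul_right _ _)

lemma dvd_add_sq_mul_of_dvd_add (h : η - 1 ∣ a + b) : η - 1 ∣ a + η ^ 2 * b :=
  (show a + η ^ 2 * b = a + b + (η - 1) * ((η + 1) * b) by ring) ▸ h.add (dvd_mul_right _ _)

lemma cube_dvd_cube_add_cube (hη : η ^ 2 + η + 1 = 0) (h : η - 1 ∣ a + b) :
    (η - 1) ^ 3 ∣ a ^ 3 + b ^ 3 := by
  rw [cube_add_cube_eq_mul hη, pow_succ, sq]
  exact mul_dvd_mul (mul_dvd_mul h (dvd_add_mul_of_dvd_add h)) (dvd_add_sq_mul_of_dvd_add h)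

lemma dvd_add_of_dvd_cube_add_cube (hη : η ^ 2 + η + 1 = 0) (hprime : Prime (η - 1))
    (h : η - 1 ∣ a ^ 3 + b ^ 3) : η - 1 ∣ a + b := by
  refine hprime.dvd_of_dvd_pow (n := 3) ?_
  have hthree : η - 1 ∣ 3 := ⟨-(η + 2), by linear_combination hη⟩
  rw [show (a + b) ^ 3 = a ^ 3 + b ^ 3 + 3 * (a * b * (a + b)) by ring]
  exact h.add (hthree.mul_right _)

lemma eq_one_or_neg_one_of_sq_dvd_cube_add_unit_mul_cube {l y z : R} {v : Rˣ}
    (hkummer : ∀ u : Rˣ, (∃ n : ℤ, l ^ 2 ∣ (u - n : R)) → u = 1 ∨ u = -1)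
    (hy : l ^ 2 ∣ y ^ 3 - 1 ∨ l ^ 2 ∣ y ^ 3 + 1) (hz : l ^ 2 ∣ z ^ 3 - 1 ∨ l ^ 2 ∣ z ^ 3 + 1)
    (h : l ^ 2 ∣ y ^ 3 + v * z ^ 3) : v = 1 ∨ v = -1 := by
  refine hkummer v ?_
  rcases hy with hy | hy <;> rcases hz with hz | hz
  · exact ⟨-1, by convert (h.sub hy).sub (hz.mul_left (v : R)) using 1; push_cast; ring⟩
  · exact ⟨1, by convert (hy.sub h).add (hz.mul_left (v : R)) using 1; push_cast; ring⟩
  · exact ⟨1, by convert (h.sub hy).sub (hz.mul_left (v : R)) using 1; push_cast; ring⟩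
  · exact ⟨-1, by convert (hy.sub h).add (hz.mul_left (v : R)) using 1; push_cast; ring⟩

section Domain

variable [IsDomain R]

lemma exists_cube_eq_and_sq_dvd_add (hη : η ^ 2 + η + 1 = 0) (hprime : Prime (η - 1))
    (h : (η - 1) ^ 4 ∣ a ^ 3 + b ^ 3) :
    ∃ b', Associated b b' ∧ b' ^ 3 = b ^ 3 ∧ (η - 1) ^ 2 ∣ a + b' := by
  have hη₃ := cube_eq_one_of_sq_add_self_add_one hη
  have hunit := isUnit_of_sq_add_self_add_one hη
  have hab : η - 1 ∣ a + b :=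
    dvd_add_of_dvd_cube_add_cube hη hprime ((dvd_pow_self _ four_ne_zero).trans h)
  obtain ⟨x, hx⟩ := hab
  obtain ⟨y, hy⟩ := dvd_add_mul_of_dvd_add ⟨x, hx⟩
  obtain ⟨z, hz⟩ := dvd_add_sq_mul_of_dvd_add ⟨x, hx⟩
  have hxyz : η - 1 ∣ x * y * z := by
    refine (mul_dvd_mul_iff_left (pow_ne_zero 3 hprime.ne_zero)).1 ?_
    rw [← pow_succ, show (η - 1) ^ 3 * (x * y * z) = a ^ 3 + b ^ 3 by
      rw [cube_add_cube_eq_mul hη, hx, hy, hz]; ring]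
    exact h
  rcases hprime.dvd_or_dvd hxyz with hxy | hdvd
  · rcases hprime.dvd_or_dvd hxy with hdvd | hdvd
    · exact ⟨b, .refl b, rfl, by rw [hx, sq]; exact mul_dvd_mul_left _ hdvd⟩
    · exact ⟨η * b, associated_unit_mul_right b η hunit, by rw [mul_pow, hη₃, one_mul],
        by rw [hy, sq]; exact mul_dvd_mul_left _ hdvd⟩
  · exact ⟨η ^ 2 * b, associated_unit_mul_right b _ (hunit.pow 2),
      by rw [mul_pow, pow_right_comm, hη₃, one_pow, one_mul],
      by rw [hz, sq]; exact mul_dvd_mul_left _ hdvd⟩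

lemma exists_cube_add_cube_factors (hη : η ^ 2 + η + 1 = 0) (hprime : Prime (η - 1)) {n : ℕ}
    {u : R} (hab : IsCoprime a b)
    (H : a ^ 3 + b ^ 3 = u * (η - 1) ^ (3 * (n + 1) + 2) * c ^ 3) (hdvd : (η - 1) ^ 2 ∣ a + b) :
    ∃ x y z, (η - 1) ^ (3 * (n + 1)) * x = a + 1 * b ∧ (η - 1) * y = a + η * b ∧
      (η - 1) * z = a + η ^ 2 * b ∧ x * y * z = u * c ^ 3 := by
  have hdvd₁ : η - 1 ∣ a + b := (dvd_pow_self _ two_ne_zero).trans hdvd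
  have hb : ¬ η - 1 ∣ b := fun hb ↦
    hprime.not_isUnit (hab.isUnit_of_dvd' ((dvd_add_left hb).1 hdvd₁) hb)
  obtain ⟨s, hs⟩ := hdvd
  have hy : (η - 1) * ((η - 1) * s + b) = a + η * b := by linear_combination -hs
  have hz : (η - 1) * ((η - 1) * s + (η + 1) * b) = a + η ^ 2 * b := by linear_combination -hs
  have hy' : ¬ η - 1 ∣ (η - 1) * s + b := fun h ↦ hb ((dvd_add_right (dvd_mul_right _ s)).1 h)
  have hz' : ¬ η - 1 ∣ (η - 1) * s + (η + 1) * b := fun h ↦ hb <| by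
    rw [show b = -η * ((η + 1) * b) by linear_combination b * hη]
    exact ((dvd_add_right (dvd_mul_right _ s)).1 h).mul_left _
  set y := (η - 1) * s + b
  set z := (η - 1) * s + (η + 1) * b
  have hprod : (a + b) * y * z = (η - 1) ^ (3 * (n + 1)) * (u * c ^ 3) := by
    refine mul_left_cancel₀ (pow_ne_zero 2 hprime.ne_zero) ?_
    rw [cube_add_cube_eq_mul hη, ← hy, ← hz, pow_add] at H
    linear_combination H
  obtain ⟨x, hx⟩ : (η - 1) ^ (3 * (n + 1)) ∣ a + b :=
    hprime.pow_dvd_of_dvd_mul_right _ hy' (hprime.pow_dvd_of_dvd_mul_right _ hz' ⟨_, hprod⟩)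
  refine ⟨x, y, z, by rw [one_mul, hx], hy, hz, ?_⟩
  refine mul_left_cancel₀ (pow_ne_zero (3 * (n + 1)) hprime.ne_zero) ?_
  rw [← hprod, hx]
  ring

section PrincipalIdealDomain

variable [IsPrincipalIdealRing R]

lemma isCoprime_of_mul_eq_add_mul {l r s x y θ φ : R} (hl : Prime l) (hθφ : Associated l (θ - φ))
    (hab : IsCoprime a b) (hx : r * x = a + θ * b) (hy : s * y = a + φ * b) (hlx : ¬ l ∣ x) :
    IsCoprime x y := by
  refine isCoprime_of_prime_dvd (fun h ↦ hlx (h.1 ▸ dvd_zero l)) fun p hp hpx hpy ↦ ?_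
  have hpl : ¬ p ∣ θ - φ := fun h ↦
    hlx (((hp.dvd_prime_iff_associated (hθφ.prime hl)).1 h |>.trans hθφ.symm).symm.dvd.trans hpx)
  have hpx' : p ∣ a + θ * b := hx ▸ hpx.mul_left r
  have hpy' : p ∣ a + φ * b := hy ▸ hpy.mul_left s
  have hpa : p ∣ (θ - φ) * a := by
    rw [show (θ - φ) * a = θ * (a + φ * b) - φ * (a + θ * b) by ring]
    exact (hpy'.mul_left θ).sub (hpx'.mul_left φ)
  have hpb : p ∣ (θ - φ) * b := by
    rw [show (θ - φ) * b = a + θ * b - (a + φ * b) by ring]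
    exact hpx'.sub hpy'
  exact hp.not_isUnit (hab.isUnit_of_dvd' ((hp.dvd_or_dvd hpa).resolve_left hpl)
    ((hp.dvd_or_dvd hpb).resolve_left hpl))

lemma exists_associated_pow_of_associated_pow_mul_mul {n : ℕ} {x y z : R} (hxy : IsCoprime x y)
    (hxz : IsCoprime x z) (hyz : IsCoprime y z) (h : Associated (c ^ n) (x * y * z)) :
    ∃ X Y Z, Associated (X ^ n) x ∧ Associated (Y ^ n) y ∧ Associated (Z ^ n) z := by
  have hxyz := hxz.mul_left hyz
  obtain ⟨T, hT⟩ := exists_associated_pow_of_associated_pow_mul hxyz h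
  obtain ⟨X, hX⟩ := exists_associated_pow_of_associated_pow_mul hxy hT
  obtain ⟨Y, hY⟩ := exists_associated_pow_of_associated_pow_mul hxy.symm (mul_comm x y ▸ hT)
  obtain ⟨Z, hZ⟩ := exists_associated_pow_of_associated_pow_mul hxyz.symm (mul_comm _ z ▸ h)
  exact ⟨X, Y, Z, hX, hY, hZ⟩

lemma exists_cube_add_unit_mul_cube_eq (hη : η ^ 2 + η + 1 = 0) (hprime : Prime (η - 1)) {n : ℕ}
    {u : Rˣ} (hab : IsCoprime a b) (hc : ¬ η - 1 ∣ c)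
    (H : a ^ 3 + b ^ 3 = u * (η - 1) ^ (3 * (n + 1) + 2) * c ^ 3) (hdvd : (η - 1) ^ 2 ∣ a + b) :
    ∃ (x y z : R) (v v' : Rˣ), IsCoprime y z ∧ ¬ η - 1 ∣ x * y * z ∧
      y ^ 3 + v * z ^ 3 = v' * (η - 1) ^ (3 * n + 2) * x ^ 3 := by
  obtain ⟨x, y, z, hx, hy, hz, hxyz⟩ := exists_cube_add_cube_factors hη hprime hab H hdvd
  have hη₃ := cube_eq_one_of_sq_add_self_add_one hη
  have hdvd_xyz : ¬ η - 1 ∣ x * y * z := by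
    rw [hxyz, Units.dvd_mul_left]
    exact fun h ↦ hc (hprime.dvd_of_dvd_pow h)
  have hdvd_x : ¬ η - 1 ∣ x := fun h ↦ hdvd_xyz ((h.mul_right y).mul_right z)
  have hdvd_y : ¬ η - 1 ∣ y := fun h ↦ hdvd_xyz ((h.mul_left x).mul_right z)
  let ε : Rˣ := (isUnit_of_sq_add_self_add_one hη).unit
  have hε : (ε : R) = η := rfl
  have hxy : IsCoprime x y := isCoprime_of_mul_eq_add_mul hprime ⟨-1, by simp⟩ hab hx hy hdvd_x
  have hxz : IsCoprime x z := isCoprime_of_mul_eq_add_mul hprime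
    ⟨ε ^ 2, by rw [Units.val_pow_eq_pow_val, hε]; linear_combination hη₃⟩ hab hx hz hdvd_x
  have hyz : IsCoprime y z := isCoprime_of_mul_eq_add_mul hprime
    ⟨-ε, by rw [Units.val_neg, hε]; ring⟩ hab hy hz hdvd_y
  obtain ⟨X, Y, Z, ⟨u₁, rfl⟩, ⟨u₂, rfl⟩, ⟨u₃, rfl⟩⟩ :=
    exists_associated_pow_of_associated_pow_mul_mul hxy hxz hyz
      (show Associated (c ^ 3) (x * y * z) from ⟨u, by rw [hxyz, mul_comm]⟩)
  have hrel : (η - 1) ^ (3 * n + 2) * (X ^ 3 * u₁) + η * (Y ^ 3 * u₂)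
      + η ^ 2 * (Z ^ 3 * u₃) = 0 := by
    refine mul_left_cancel₀ hprime.ne_zero ?_
    linear_combination hx + η * hy + η ^ 2 * hz + (a + b + (η ^ 2 - η) * b) * hη
  refine ⟨X, Y, Z, ε * u₃ * u₂⁻¹, -ε ^ 2 * u₁ * u₂⁻¹, ?_, fun h ↦ hdvd_xyz ?_, ?_⟩
  · exact (IsCoprime.pow_iff three_pos three_pos).1 ((isCoprime_mul_unit_right_left u₂.isUnit _ _).1
      ((isCoprime_mul_unit_right_right u₃.isUnit _ _).1 hyz))
  · exact h.trans ⟨X ^ 2 * Y ^ 2 * Z ^ 2 * u₁ * u₂ * u₃, by ring⟩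
  · have hu₂ : (u₂ : R) * (u₂⁻¹ : Rˣ) = 1 := u₂.mul_inv
    simp only [Units.val_mul, Units.val_neg, Units.val_pow_eq_pow_val, hε]
    linear_combination η ^ 2 * ((u₂⁻¹ : Rˣ) : R) * hrel - Y ^ 3 * hu₂
      - (Y ^ 3 * u₂ * (u₂⁻¹ : Rˣ) + η * Z ^ 3 * u₃ * (u₂⁻¹ : Rˣ)) * hη₃

lemma exists_cube_add_cube_descent (hη : η ^ 2 + η + 1 = 0) (hprime : Prime (η - 1))
    (hkummer : ∀ u : Rˣ, (∃ n : ℤ, (η - 1) ^ 2 ∣ (u - n : R)) → u = 1 ∨ u = -1)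
    (hcube : ∀ x : R, ¬ η - 1 ∣ x → (η - 1) ^ 2 ∣ x ^ 3 - 1 ∨ (η - 1) ^ 2 ∣ x ^ 3 + 1)
    {n : ℕ} {u : Rˣ} (hab : IsCoprime a b) (hc : ¬ η - 1 ∣ c)
    (H : a ^ 3 + b ^ 3 = u * (η - 1) ^ (3 * (n + 1) + 2) * c ^ 3) :
    ∃ (a' b' c' : R) (u' : Rˣ), IsCoprime a' b' ∧ ¬ η - 1 ∣ c' ∧
      a' ^ 3 + b' ^ 3 = u' * (η - 1) ^ (3 * n + 2) * c' ^ 3 := by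
  obtain ⟨b₁, hb₁, hcube_b₁, hdvd⟩ := exists_cube_eq_and_sq_dvd_add (a := a) (b := b) hη hprime
    (H ▸ ((pow_dvd_pow _ (by omega)).mul_left _).mul_right _)
  have hab₁ : IsCoprime a b₁ := hab.of_isCoprime_of_dvd_right hb₁.symm.dvd
  obtain ⟨x, y, z, v, v', hyz, hxyz, hrel⟩ :=
    exists_cube_add_unit_mul_cube_eq hη hprime hab₁ hc (hcube_b₁ ▸ H) hdvd
  have hx : ¬ η - 1 ∣ x := fun h ↦ hxyz ((h.mul_right y).mul_right z)
  have hy : ¬ η - 1 ∣ y := fun h ↦ hxyz ((h.mul_left x).mul_right z)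
  have hz : ¬ η - 1 ∣ z := fun h ↦ hxyz (h.mul_left _)
  have hsq : (η - 1) ^ 2 ∣ y ^ 3 + v * z ^ 3 :=
    hrel ▸ ((pow_dvd_pow _ (by omega)).mul_left _).mul_right _
  rcases eq_one_or_neg_one_of_sq_dvd_cube_add_unit_mul_cube hkummer (hcube y hy) (hcube z hz) hsq
    with rfl | rfl
  · exact ⟨y, z, x, v', hyz, hx, by simpa using hrel⟩
  · exact ⟨y, -z, x, v', hyz.neg_right, hx, by simpa [Odd.neg_pow (by decide : Odd 3)] using hrel⟩

lemma cube_add_cube_ne_unit_mul_pow_mul_cube (hη : η ^ 2 + η + 1 = 0) (hprime : Prime (η - 1))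
    (hkummer : ∀ u : Rˣ, (∃ n : ℤ, (η - 1) ^ 2 ∣ (u - n : R)) → u = 1 ∨ u = -1)
    (hcube : ∀ x : R, ¬ η - 1 ∣ x → (η - 1) ^ 2 ∣ x ^ 3 - 1 ∨ (η - 1) ^ 2 ∣ x ^ 3 + 1)
    (n : ℕ) (u : Rˣ) (hab : IsCoprime a b) (hc : ¬ η - 1 ∣ c) :
    a ^ 3 + b ^ 3 ≠ u * (η - 1) ^ (3 * n + 2) * c ^ 3 := by
  intro H
  induction n generalizing a b c u with
  | zero =>
    have hdvd : η - 1 ∣ a ^ 3 + b ^ 3 := H ▸ ((dvd_pow_self _ (by omega)).mul_left _).mul_right _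
    have hdvd₃ := cube_dvd_cube_add_cube hη (dvd_add_of_dvd_cube_add_cube hη hprime hdvd)
    rw [H, mul_zero, zero_add, mul_comm (u : R), mul_assoc, pow_succ,
      mul_dvd_mul_iff_left (pow_ne_zero 2 hprime.ne_zero), Units.dvd_mul_left] at hdvd₃
    exact hc (hprime.dvd_of_dvd_pow hdvd₃)
  | succ n ih =>
    obtain ⟨a', b', c', u', hab', hc', H'⟩ :=
      exists_cube_add_cube_descent hη hprime hkummer hcube hab hc H
    exact ih u' hab' hc' H'

end PrincipalIdealDomain

end Domain

open NumberField IsCyclotomicExtension.Rat.Three in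
lemma int_cube_add_cube_ne_three_mul_cube_of_isCyclotomicExtension (K : Type*) [Field K]
    [NumberField K] [IsCyclotomicExtension {3} ℚ K] {a b c : ℤ} (hab : IsCoprime a b) (hc : c ≠ 0) :
    a ^ 3 + b ^ 3 ≠ 3 * c ^ 3 := by
  intro H
  have hζ := IsCyclotomicExtension.zeta_spec 3 ℚ K
  have : IsPrincipalIdealRing (𝓞 K) := IsCyclotomicExtension.Rat.three_pid K
  set η : 𝓞 K := hζ.toInteger
  have hη : η ^ 2 + η + 1 = 0 := eta_sq_add_eta_add_one hζ
  have hη₃ := cube_eq_one_of_sq_add_self_add_one hη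
  have hprime : Prime (η - 1) := hζ.zeta_sub_one_prime'
  obtain ⟨n, c', hc', hcc'⟩ :=
    WfDvdMonoid.max_power_factor (Int.cast_ne_zero.2 hc : (c : 𝓞 K) ≠ 0) hprime.irreducible
  let ε : (𝓞 K)ˣ := ⟨-η ^ 2, -η, by linear_combination hη₃, by linear_combination hη₃⟩
  have hthree : (3 : 𝓞 K) = ε * (η - 1) ^ 2 := by
    linear_combination (norm := (simp only [ε]; ring)) (η ^ 2 - 3 * η + 3) * hη
  refine cube_add_cube_ne_unit_mul_pow_mul_cube hη hprime
    (fun u hu ↦ eq_one_or_neg_one_of_unit_of_congruent hζ u hu) (fun x hx ↦ ?_) n ε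
    (hab.intCast : IsCoprime (a : 𝓞 K) b) hc' ?_
  · exact (lambda_pow_four_dvd_cube_sub_one_or_add_one_of_lambda_not_dvd hζ hx).imp
      (pow_dvd_pow _ (by norm_num)).trans (pow_dvd_pow _ (by norm_num)).trans
  · have H' : (a : 𝓞 K) ^ 3 + (b : 𝓞 K) ^ 3 = 3 * (c : 𝓞 K) ^ 3 := by exact_mod_cast H
    rw [H', hcc', hthree]
    ring

instance isCyclotomicExtension_three_cyclotomicField :
    IsCyclotomicExtension {3} ℚ (CyclotomicField 3 ℚ) := by
  rw [Subsingleton.elim (DivisionRing.toRatAlgebra : Algebra ℚ (CyclotomicField 3 ℚ))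
    (CyclotomicField.algebra 3 ℚ)]
  exact CyclotomicField.isCyclotomicExtension 3 ℚ

lemma rat_one_add_cube_ne_three_mul_cube {w z : ℚ} (hz : z ≠ 0) : 1 + w ^ 3 ≠ 3 * z ^ 3 := by
  intro H
  have hden : (w.den : ℚ) ≠ 0 := by exact_mod_cast w.den_ne_zero
  set t : ℚ := z * w.den with ht
  have ht₀ : t ≠ 0 := mul_ne_zero hz hden
  have hsum : (w.den : ℚ) ^ 3 + w.num ^ 3 = 3 * t ^ 3 := by
    rw [ht, mul_pow, ← mul_assoc, ← H, add_mul, one_mul, ← mul_pow, Rat.mul_den_eq_num]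
  have hint : ((w.den : ℤ) ^ 3 + w.num ^ 3) * t.den ^ 3 = 3 * t.num ^ 3 := by
    have : ((w.den : ℚ) ^ 3 + w.num ^ 3) * t.den ^ 3 = 3 * t.num ^ 3 := by
      rw [hsum, mul_assoc, ← mul_pow, Rat.mul_den_eq_num]
    exact_mod_cast this
  have ht_den : t.den = 1 := by
    have hcop : IsCoprime ((t.den : ℤ) ^ 3) (t.num ^ 3) := (Rat.isCoprime_num_den t).symm.pow
    have hdvd : (t.den : ℤ) ^ 3 ∣ 3 := hcop.dvd_of_dvd_mul_right ⟨_, by rw [← hint, mul_comm]⟩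
    have hle := Nat.le_of_dvd (by norm_num) (by exact_mod_cast hdvd : t.den ^ 3 ∣ 3)
    by_contra hne
    have : 2 ^ 3 ≤ t.den ^ 3 := Nat.pow_le_pow_left (by have := t.den_pos; omega) 3
    omega
  have : NumberField (CyclotomicField 3 ℚ) := IsCyclotomicExtension.numberField {3} ℚ _
  refine int_cube_add_cube_ne_three_mul_cube_of_isCyclotomicExtension (CyclotomicField 3 ℚ)
    (Rat.isCoprime_num_den w).symm (Rat.num_ne_zero.2 ht₀) ?_
  simpa [ht_den] using hint

end CubicDescent

section RationalCubic

section LinearOrderedField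

variable {𝕜 : Type*} [Field 𝕜] [LinearOrder 𝕜] [IsStrictOrderedRing 𝕜] {s g N u : 𝕜}

lemma ne_zero_of_add_cube_eq_mul_add_cube (hg : 1 < g) (hs : s ≤ g) (hN : 1 ≤ N)
    (h : s + u ^ 3 = N * (g + u) ^ 3) : u ≠ 0 := by
  rintro rfl
  have hlt : g < g ^ 3 := lt_self_pow₀ hg (by norm_num)
  have hle : g ^ 3 ≤ N * g ^ 3 := le_mul_of_one_le_left (by positivity) hN
  simp only [zero_pow three_ne_zero, add_zero] at h
  linarith

lemma add_ne_zero_of_add_cube_eq_mul_add_cube (hg : 1 < g) (hs : s ≤ g)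
    (h : s + u ^ 3 = N * (g + u) ^ 3) : g + u ≠ 0 := by
  intro h₀
  have hlt : g < g ^ 3 := lt_self_pow₀ hg (by norm_num)
  rw [h₀, eq_neg_of_add_eq_zero_right h₀, Odd.neg_pow (by decide : Odd 3),
    zero_pow three_ne_zero, mul_zero] at h
  linarith

end LinearOrderedField

lemma three_mul_padicValRat_eq_of_pow_add_cube_eq {p : ℕ} [Fact p.Prime] {a c : ℕ} {u : ℚ}
    (ha : a ≠ 0) (hc : c ≠ 0) (h : (p : ℚ) ^ c + u ^ 3 = p ^ a * (p ^ c + u) ^ 3) :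
    3 * padicValRat p u = c := by
  have hp : 1 < (p : ℚ) := by exact_mod_cast (Fact.out : p.Prime).one_lt
  have hpc : 1 < (p : ℚ) ^ c := one_lt_pow₀ hp hc
  have hu : u ≠ 0 := ne_zero_of_add_cube_eq_mul_add_cube hpc le_rfl (one_le_pow₀ hp.le) h
  have hsum : (p : ℚ) ^ c + u ≠ 0 := add_ne_zero_of_add_cube_eq_mul_add_cube hpc le_rfl h
  have hsum₃ : (p : ℚ) ^ c + u ^ 3 ≠ 0 := h ▸ by positivity
  have hval_pow (n : ℕ) : padicValRat p ((p : ℚ) ^ n) = n := by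
    rw [padicValRat.pow, padicValRat.self (Fact.out : p.Prime).one_lt, mul_one]
  have hval_cube : padicValRat p (u ^ 3) = 3 * padicValRat p u := padicValRat.pow u
  have hval : padicValRat p ((p : ℚ) ^ c + u ^ 3) = a + 3 * padicValRat p ((p : ℚ) ^ c + u) := by
    rw [h, padicValRat.mul (by positivity) (by positivity), hval_pow, padicValRat.pow]
    norm_num
  rcases lt_trichotomy (3 * padicValRat p u) c with hlt | heq | hgt
  · rw [add_comm, padicValRat.add_eq_of_lt (by rwa [add_comm]) (by positivity) (by positivity)
      (by rwa [hval_pow, hval_cube]), add_comm _ u, padicValRat.add_eq_of_lt (by rwa [add_comm]) hu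
      (by positivity) (by rw [hval_pow]; omega), hval_cube] at hval
    omega
  · exact heq
  · rw [padicValRat.add_eq_of_lt hsum₃ (by positivity) (by positivity)
      (by rwa [hval_pow, hval_cube]), hval_pow] at hval
    have hmin := padicValRat.min_le_padicValRat_add (p := p) hsum
    rw [hval_pow] at hmin
    omega

lemma exists_one_add_cube_eq_of_three_pow_add_cube_eq {b c : ℕ} {u : ℚ} (hb : b ≠ 0) (hc : c ≠ 0)
    (h : 3 ^ c + u ^ 3 = 9 ^ b * (3 ^ c + u) ^ 3) :
    ∃ (d : ℕ) (w : ℚ), d ≠ 0 ∧ 1 + w ^ 3 = 9 ^ b * (9 ^ d + w) ^ 3 := by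
  have hval : 3 * padicValRat 3 u = c :=
    three_mul_padicValRat_eq_of_pow_add_cube_eq (a := 2 * b) (by omega) hc
      (by rw [pow_mul]; norm_num [h])
  obtain ⟨d, rfl⟩ : 3 ∣ c := by omega
  refine ⟨d, u / 3 ^ d, by omega, ?_⟩
  have hnine : (9 : ℚ) ^ d = (3 ^ d) ^ 2 := by rw [← pow_mul, mul_comm, pow_mul]; norm_num
  rw [mul_comm 3 d, pow_mul] at h
  rw [hnine]
  field_simp
  linear_combination h

lemma rat_one_add_cube_ne_of_three_dvd {b d : ℕ} {w : ℚ} (hd : d ≠ 0) (hb : 3 ∣ b) :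
    1 + w ^ 3 ≠ 9 ^ b * (9 ^ d + w) ^ 3 := by
  intro h
  obtain ⟨f, rfl⟩ := hb
  have hg : (1 : ℚ) < 9 ^ d := one_lt_pow₀ (by norm_num) hd
  refine fermatLastTheoremFor_iff_rat.1 fermatLastTheoremThree 1 w (9 ^ f * (9 ^ d + w))
    one_ne_zero
    (ne_zero_of_add_cube_eq_mul_add_cube hg hg.le (one_le_pow₀ (by norm_num)) h)
    (mul_ne_zero (by positivity) (add_ne_zero_of_add_cube_eq_mul_add_cube hg hg.le h)) ?_
  rw [one_pow, h]
  ring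

lemma rat_one_add_cube_ne_of_mod_three_eq_two {b d : ℕ} {w : ℚ} (hd : d ≠ 0) (hb : b % 3 = 2) :
    1 + w ^ 3 ≠ 9 ^ b * (9 ^ d + w) ^ 3 := by
  obtain ⟨f, rfl⟩ : ∃ f, b = 3 * f + 2 := ⟨b / 3, by omega⟩
  intro h
  have hg : (1 : ℚ) < 9 ^ d := one_lt_pow₀ (by norm_num) hd
  refine rat_one_add_cube_ne_three_mul_cube (w := w) (z := 3 * 9 ^ f * (9 ^ d + w))
    (mul_ne_zero (by positivity) (add_ne_zero_of_add_cube_eq_mul_add_cube hg hg.le h)) ?_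
  rw [h]
  ring

open Polynomial in
lemma exists_int_eq_of_cube_add_mul_add_eq_zero {p q : ℤ} {x : ℚ} (h : x ^ 3 + p * x + q = 0) :
    ∃ M : ℤ, (M : ℚ) = x := by
  have hmonic : (X ^ 3 + C p * X + C q).Monic := by monicity!
  exact isInteger_of_is_root_of_monic hmonic (r := x) (by simpa using h)

lemma exists_depressedCubic_eq_zero {N g : ℤ} {w : ℚ} (h : 1 + w ^ 3 = N * (g + w) ^ 3) :
    ∃ M : ℤ, depressedCubic N g M = 0 := by
  have hroot : ((N - 1) * w + N * g : ℚ) ^ 3 - 3 * N * g ^ 2 * ((N - 1) * w + N * g)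
      + N * (N + 1) * g ^ 3 - (N - 1) ^ 2 = 0 := by
    linear_combination -((N : ℚ) - 1) ^ 2 * h
  obtain ⟨M, hM⟩ := exists_int_eq_of_cube_add_mul_add_eq_zero (p := -(3 * N * g ^ 2))
    (q := N * (N + 1) * g ^ 3 - (N - 1) ^ 2) (x := (N - 1) * w + N * g)
    (by push_cast; linear_combination hroot)
  refine ⟨M, ?_⟩
  rw [← hM] at hroot
  exact_mod_cast hroot

lemma rat_one_add_cube_ne_nine_pow_mul_cube {b d : ℕ} {w : ℚ} (hd : d ≠ 0) :
    1 + w ^ 3 ≠ 9 ^ b * (9 ^ d + w) ^ 3 := by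
  obtain hb | hb | hb : b % 3 = 0 ∨ b % 3 = 1 ∨ b % 3 = 2 := by omega
  · exact rat_one_add_cube_ne_of_three_dvd hd (Nat.dvd_of_mod_eq_zero hb)
  · obtain ⟨e, rfl⟩ : ∃ e, b = 3 * e + 1 := ⟨b / 3, by omega⟩
    intro h
    obtain ⟨M, hM⟩ := exists_depressedCubic_eq_zero (N := 9 ^ (3 * e + 1)) (g := 9 ^ d) (w := w)
      (by exact_mod_cast h)
    exact depressedCubic_nine_pow_ne_zero hd hM
  · exact rat_one_add_cube_ne_of_mod_three_eq_two hd hb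

lemma rat_three_pow_add_cube_ne_nine_pow_mul_cube {b c : ℕ} {u : ℚ} (hb : b ≠ 0) (hc : c ≠ 0) :
    3 ^ c + u ^ 3 ≠ 9 ^ b * (3 ^ c + u) ^ 3 := by
  intro h
  obtain ⟨d, w, hd, hw⟩ := exists_one_add_cube_eq_of_three_pow_add_cube_eq hb hc h
  exact rat_one_add_cube_ne_nine_pow_mul_cube hd hw

end RationalCubic

section QuadraticField

open Polynomial

lemma exists_isRoot_of_natDegree_eq_three {k K : Type*} [Field k] [Field K] [Algebra k K]
    (hK : Module.finrank k K = 2) {f : k[X]} (hf : f.natDegree = 3) {u : K}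
    (hu : aeval u f = 0) : ∃ v, f.IsRoot v := by
  have : FiniteDimensional k K := Module.finite_of_finrank_pos (by omega)
  have hu_int : IsIntegral k u := Algebra.IsIntegral.isIntegral u
  have hle : (minpoly k u).natDegree ≤ 2 := hK ▸ minpoly.natDegree_le u
  have hpos : 0 < (minpoly k u).natDegree := minpoly.natDegree_pos hu_int
  obtain ⟨g, hg⟩ := minpoly.dvd k u hu
  have hg₀ : g ≠ 0 := by
    rintro rfl
    simp [hg] at hf
  rw [hg, natDegree_mul (minpoly.ne_zero hu_int) hg₀] at hf
  obtain hdeg | hdeg : (minpoly k u).natDegree = 1 ∨ g.natDegree = 1 := by omega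
  · obtain ⟨v, hv⟩ := exists_root_of_degree_eq_one
      ((degree_eq_iff_natDegree_eq_of_pos one_pos).2 hdeg)
    exact ⟨v, hg ▸ root_mul_right_of_isRoot _ hv⟩
  · obtain ⟨v, hv⟩ := exists_root_of_degree_eq_one
      ((degree_eq_iff_natDegree_eq_of_pos one_pos).2 hdeg)
    exact ⟨v, hg ▸ root_mul_left_of_isRoot _ hv⟩

lemma exists_add_cube_eq_mul_add_cube_of_finrank_eq_two {k K : Type*} [Field k] [Field K]
    [Algebra k K] (hK : Module.finrank k K = 2) {s N : k} (hN : N ≠ 1) {u : K}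
    (h : algebraMap k K s + u ^ 3 = algebraMap k K N * (algebraMap k K s + u) ^ 3) :
    ∃ v : k, s + v ^ 3 = N * (s + v) ^ 3 := by
  let f : k[X] :=
    C (1 - N) * X ^ 3 + C (-(3 * N * s)) * X ^ 2 + C (-(3 * N * s ^ 2)) * X + C (s - N * s ^ 3)
  have hf : f.natDegree = 3 := natDegree_cubic (sub_ne_zero.2 hN.symm)
  have hu : aeval u f = 0 := by
    simp only [f, map_add, map_mul, map_pow, aeval_X, aeval_C, map_sub, map_neg, map_one,
      map_ofNat]
    linear_combination h
  obtain ⟨v, hv⟩ := exists_isRoot_of_natDegree_eq_three hK hf hu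
  refine ⟨v, ?_⟩
  simp only [f, IsRoot.def, eval_add, eval_mul, eval_pow, eval_X, eval_C] at hv
  linear_combination hv

variable {K : Type*} [Field K] [Algebra ℚ K]

lemma three_pow_add_cube_ne_of_finrank_eq_two (hK : Module.finrank ℚ K = 2) {b c : ℕ} {u : K}
    (hb : b ≠ 0) (hc : c ≠ 0) : 3 ^ c + u ^ 3 ≠ 9 ^ b * (3 ^ c + u) ^ 3 := by
  intro h
  have hN : (9 : ℚ) ^ b ≠ 1 := (one_lt_pow₀ (by norm_num) hb).ne'
  obtain ⟨v, hv⟩ := exists_add_cube_eq_mul_add_cube_of_finrank_eq_two hK (s := 3 ^ c) hN (u := u)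
    (by simpa only [map_pow, map_ofNat] using h)
  exact rat_three_pow_add_cube_ne_nine_pow_mul_cube hb hc hv

lemma eq_zero_of_three_pow_mul_cube_add_cube_eq (hK : Module.finrank ℚ K = 2) {b c : ℕ} {x y : K}
    (hb : b ≠ 0) (hc : c ≠ 0) (h : 3 ^ c * x ^ 3 + y ^ 3 = 9 ^ b * (3 ^ c * x + y) ^ 3) :
    x = 0 ∧ y = 0 := by
  have hx : x = 0 := by
    by_contra hx
    refine three_pow_add_cube_ne_of_finrank_eq_two hK (u := y / x) hb hc ?_
    field_simp
    linear_combination h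
  have : CharZero K := algebraRat.charZero K
  have hN : (1 : K) - 9 ^ b ≠ 0 := by
    rw [sub_ne_zero]
    exact_mod_cast (Nat.one_lt_pow hb (by norm_num)).ne
  subst hx
  refine ⟨rfl, pow_eq_zero_iff three_ne_zero |>.1 ?_⟩
  refine (mul_eq_zero.1 ?_).resolve_left hN
  linear_combination h

lemma eq_zero_of_sum_three_pow_mul_eq_zero (hK : Module.finrank ℚ K = 2) {k : Fin 3 → ℕ}
    (hk : StrictAnti k) {C : Fin 3 → K} (hsum : ∑ b, 3 ^ k b * C b = 0)
    (hcube : ∑ b, 3 ^ k b * C b ^ 3 = 0) : C = 0 := by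
  have : CharZero K := algebraRat.charZero K
  have h3 (n : ℕ) : (3 : K) ^ n ≠ 0 := pow_ne_zero n three_ne_zero
  obtain ⟨b, hb⟩ := Nat.exists_eq_add_of_lt (hk (show (1 : Fin 3) < 2 by decide))
  obtain ⟨c, hc⟩ := Nat.exists_eq_add_of_lt (hk (show (0 : Fin 3) < 1 by decide))
  rw [Fin.sum_univ_three, hc, hb] at hsum hcube
  have hC₂ : C 2 = -3 ^ (b + 1) * (3 ^ (c + 1) * C 0 + C 1) := by
    refine mul_left_cancel₀ (h3 (k 2)) ?_
    linear_combination hsum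
  have h : 3 ^ (c + 1) * C 0 ^ 3 + C 1 ^ 3 = 9 ^ (b + 1) * (3 ^ (c + 1) * C 0 + C 1) ^ 3 := by
    refine mul_left_cancel₀ (mul_ne_zero (h3 (k 2)) (h3 (b + 1))) ?_
    have hnine : (9 : K) ^ (b + 1) = (3 ^ (b + 1)) ^ 2 := by
      rw [← pow_mul, mul_comm, pow_mul]; norm_num
    rw [hC₂] at hcube
    rw [hnine]
    linear_combination hcube
  obtain ⟨h₀, h₁⟩ := eq_zero_of_three_pow_mul_cube_add_cube_eq hK b.succ_ne_zero c.succ_ne_zero h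
  funext i
  fin_cases i <;> simp [h₀, h₁, hC₂]

end QuadraticField

section BlockShift

variable {ι : Type*} {V : ι → Type*} [∀ b, AddCommGroup (V b)]

/-- The translation group `∏ b, V b` acting on the disjoint union of the blocks `V b`, each factor
by translations of its own block. -/
def blockShift (v : ∀ b, V b) : Equiv.Perm (Σ b, V b) :=
  Equiv.sigmaCongrRight fun b ↦ Equiv.addRight (v b)

lemma blockShift_apply (v : ∀ b, V b) (b : ι) (w : V b) : blockShift v ⟨b, w⟩ = ⟨b, w + v b⟩ := rfl

variable {K : Type*} [Field K]

/-- `c` spans a one-dimensional representation of the translation group of the blocks, on which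
`v` acts through the scalar `Z v`. -/
def IsBlockSemiInvariant (Z : (∀ b, V b) → K) (c : (Σ b, V b) → K) : Prop :=
  ∀ v i, c (blockShift v i) = Z v * c i

namespace IsBlockSemiInvariant

variable {Z : (∀ b, V b) → K} {c : (Σ b, V b) → K} {r : ℕ}

lemma apply_eq [DecidableEq ι] (hc : IsBlockSemiInvariant Z c) (b : ι) (w : V b) :
    c ⟨b, w⟩ = Z (Pi.single b w) * c ⟨b, 0⟩ := by
  simpa only [blockShift_apply, Pi.single_eq_same, zero_add] using hc (Pi.single b w) ⟨b, 0⟩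

lemma single_eq_one [DecidableEq ι] (hc : IsBlockSemiInvariant Z c) {b b' : ι} (hb : b' ≠ b)
    (hne : c ⟨b', 0⟩ ≠ 0) (w : V b) : Z (Pi.single b w) = 1 := by
  have h := hc (Pi.single b w) ⟨b', 0⟩
  rw [blockShift_apply, Pi.single_eq_of_ne hb, add_zero] at h
  exact (mul_eq_right₀ hne).1 h.symm

variable [Fintype ι] [∀ b, Fintype (V b)]

lemma sum_pow_eq [DecidableEq ι] (hc : IsBlockSemiInvariant Z c)
    (hZ : ∀ b w, Z (Pi.single b w) ^ r = 1) :
    ∑ i, c i ^ r = ∑ b, (Fintype.card (V b) : K) * c ⟨b, 0⟩ ^ r := by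
  rw [Fintype.sum_sigma]
  refine Finset.sum_congr rfl fun b _ ↦ ?_
  have hconst (w : V b) : c ⟨b, w⟩ ^ r = c ⟨b, 0⟩ ^ r := by
    rw [hc.apply_eq, mul_pow, hZ, one_mul]
  simp only [hconst, Finset.sum_const, Finset.card_univ, nsmul_eq_mul]

lemma exists_ne_of_sum_pow_eq_zero [DecidableEq ι] [CharZero K] (hc : IsBlockSemiInvariant Z c)
    (hZ : ∀ b w, Z (Pi.single b w) ^ r = 1) (hr : r ≠ 0) (hsum : ∑ i, c i ^ r = 0) (hne : c ≠ 0) :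
    ∃ b b', b' ≠ b ∧ c ⟨b, 0⟩ ≠ 0 ∧ c ⟨b', 0⟩ ≠ 0 := by
  obtain ⟨⟨b, w⟩, hbw⟩ := Function.ne_iff.1 hne
  have hb : c ⟨b, 0⟩ ≠ 0 := fun h ↦ hbw (by rw [hc.apply_eq, h, mul_zero, Pi.zero_apply])
  by_contra! hall
  rw [hc.sum_pow_eq hZ, Finset.sum_eq_single b
    (fun b' _ hb' ↦ by rw [hall b b' hb' hb, zero_pow hr, mul_zero]) (by simp)] at hsum
  exact mul_ne_zero (Nat.cast_ne_zero.2 Fintype.card_ne_zero) (pow_ne_zero r hb) hsum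

lemma sum_card_mul_eq_zero (hc : IsBlockSemiInvariant Z c) (hsum : ∑ i, c i = 0) {b b' : ι}
    (hbb' : b' ≠ b) (hb : c ⟨b, 0⟩ ≠ 0) (hb' : c ⟨b', 0⟩ ≠ 0) :
    ∑ b, (Fintype.card (V b) : K) * c ⟨b, 0⟩ = 0 := by
  classical
  have hZ (a : ι) (w : V a) : Z (Pi.single a w) ^ 1 = 1 := by
    rw [pow_one]
    by_cases ha : a = b
    · subst ha
      exact hc.single_eq_one hbb' hb' w
    · exact hc.single_eq_one (Ne.symm ha) hb w
  simpa only [pow_one, hsum, eq_comm] using hc.sum_pow_eq hZ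

end IsBlockSemiInvariant

lemma eq_zero_of_isBlockSemiInvariant [Algebra ℚ K] (hK : Module.finrank ℚ K = 2) {k : Fin 3 → ℕ}
    (hk : StrictAnti k) {V : Fin 3 → Type*} [∀ b, AddCommGroup (V b)] [∀ b, Fintype (V b)]
    (hV : ∀ b, Fintype.card (V b) = 3 ^ k b) {Z : (∀ b, V b) → K} {c : (Σ b, V b) → K}
    (hc : IsBlockSemiInvariant Z c) (hZ : ∀ v, Z v ^ 3 = 1) (hsum : ∑ i, c i = 0)
    (hcube : ∑ i, c i ^ 3 = 0) : c = 0 := by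
  have : CharZero K := algebraRat.charZero K
  by_contra hne
  obtain ⟨b, b', hbb', hb, hb'⟩ :=
    hc.exists_ne_of_sum_pow_eq_zero (fun _ _ ↦ hZ _) three_ne_zero hcube hne
  have hsum' := hc.sum_card_mul_eq_zero hsum hbb' hb hb'
  have hcube' := hc.sum_pow_eq (fun _ _ ↦ hZ _) ▸ hcube
  simp only [hV, Nat.cast_pow, Nat.cast_ofNat] at hsum' hcube'
  exact hb (congrFun (eq_zero_of_sum_three_pow_mul_eq_zero hK hk hsum' hcube') b)

end BlockShift

section LeadingCoefficients

open MvPolynomial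
open scoped MonomialOrder

variable {σ K : Type*} [CommRing K]

lemma coeff_nsmul_pow_of_degree_le (m : MonomialOrder σ) {f : MvPolynomial σ K} {d : σ →₀ ℕ}
    (hd : m.degree f ≼[m] d) (r : ℕ) : coeff (r • d) (f ^ r) = coeff d f ^ r := by
  induction r with
  | zero => simp
  | succ r ih =>
    have hdeg : m.degree (f ^ r) ≼[m] r • d := (m.degree_pow_le r).trans (by
      rw [map_nsmul, map_nsmul]
      exact nsmul_le_nsmul_right hd r)
    rw [succ_nsmul, pow_succ, pow_succ, m.coeff_mul_of_add_of_degree_le hdeg hd, ih]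

lemma exists_coeff_sum_pow_eq_zero [Finite σ] {J : Type*} [Fintype J] {Q : J → MvPolynomial σ K}
    (hQ : Q ≠ 0) {r : ℕ} (hsum : ∑ i, Q i = 0) (hpow : ∑ i, Q i ^ r = 0) :
    ∃ d : σ →₀ ℕ, (fun i ↦ coeff d (Q i)) ≠ 0 ∧ ∑ i, coeff d (Q i) = 0 ∧
      ∑ i, coeff d (Q i) ^ r = 0 := by
  let _ : LinearOrder σ := LinearOrder.lift' (Finite.equivFin σ) (Equiv.injective _)
  have : WellFoundedGT σ := Finite.to_wellFoundedGT
  let m : MonomialOrder σ := MonomialOrder.lex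
  obtain ⟨i₀, hi₀⟩ := Function.ne_iff.1 hQ
  have : Nonempty {i // Q i ≠ 0} := ⟨⟨i₀, hi₀⟩⟩
  obtain ⟨⟨i, hi⟩, hmax⟩ := Finite.exists_max fun j : {i // Q i ≠ 0} ↦ m.toSyn (m.degree (Q j))
  have hle (j : J) : m.degree (Q j) ≼[m] m.degree (Q i) := by
    by_cases hj : Q j = 0
    · rw [hj, m.degree_zero, map_zero]
      exact m.zero_le _
    · exact hmax ⟨j, hj⟩
  refine ⟨m.degree (Q i), Function.ne_iff.2 ⟨i, m.coeff_degree_ne_zero_iff.2 hi⟩, ?_, ?_⟩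
  · rw [← coeff_sum, hsum, coeff_zero]
  · simp only [← coeff_nsmul_pow_of_degree_le m (hle _)]
    rw [← coeff_sum, hpow, coeff_zero]

end LeadingCoefficients

section FourierSubstitution

open MvPolynomial

/-- The substitution `X i ↦ a i * X i`. -/
def scaleVars {σ K : Type*} [CommSemiring K] (a : σ → K) :
    MvPolynomial σ K →ₐ[K] MvPolynomial σ K :=
  aeval fun i ↦ C (a i) * X i

lemma coeff_scaleVars {σ K : Type*} [CommSemiring K] (a : σ → K) (q : MvPolynomial σ K)
    (d : σ →₀ ℕ) : coeff d (scaleVars a q) = (d.prod fun i n ↦ a i ^ n) * coeff d q := by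
  classical
  induction q using MvPolynomial.induction_on' with
  | add p q hp hq => rw [map_add, coeff_add, coeff_add, hp, hq, mul_add]
  | monomial s c =>
    have hprod : (s.prod fun i n ↦ (C (a i) * X i : MvPolynomial σ K) ^ n) =
        C (s.prod fun i n ↦ a i ^ n) * monomial s 1 := by
      rw [monomial_eq (s := s) (a := 1)]
      simp only [Finsupp.prod, mul_pow, Finset.prod_mul_distrib, map_prod, map_pow, map_one,
        one_mul]
    rw [scaleVars, aeval_monomial, algebraMap_eq, hprod, coeff_C_mul, coeff_C_mul, coeff_monomial,
      coeff_monomial]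
    split_ifs with h
    · rw [h, mul_one, mul_comm]
    · simp

lemma scaleVars_injective {σ K : Type*} [Field K] {a : σ → K} (ha : ∀ i, a i ≠ 0) :
    Function.Injective (scaleVars a) := by
  intro p q h
  ext d
  have hd := congrArg (coeff d) h
  rw [coeff_scaleVars, coeff_scaleVars] at hd
  exact mul_left_cancel₀ (Finset.prod_ne_zero_iff.2 fun i _ ↦ pow_ne_zero _ (ha i)) hd

lemma sum_addChar_dotProduct {R K κ : Type*} [CommRing R] [Fintype R] [DecidableEq R] [Field K]
    [Fintype κ] [DecidableEq κ] {e : AddChar R K} (he : e.IsPrimitive) (w : κ → R) :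
    ∑ χ : κ → R, e (χ ⬝ᵥ w) = if w = 0 then (Fintype.card (κ → R) : K) else 0 := by
  have hprod : ∑ χ : κ → R, e (χ ⬝ᵥ w) = ∏ j, ∑ x, e (x * w j) := by
    rw [Finset.prod_univ_sum, Fintype.piFinset_univ]
    exact Finset.sum_congr rfl fun χ _ ↦
      map_prod e.toMonoidHom (fun j ↦ Multiplicative.ofAdd (χ j * w j)) Finset.univ
  simp only [hprod, AddChar.sum_mulShift _ he]
  split_ifs with hw
  · simp [hw]
  · obtain ⟨j, hj⟩ := Function.ne_iff.1 hw
    exact Finset.prod_eq_zero (Finset.mem_univ j) (by simp [show w j ≠ 0 from hj])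

variable {R K ι : Type*} [CommRing R] [Field K] {κ : ι → Type*} [∀ b, Fintype (κ b)]

/-- On each block of variables, the discrete Fourier transform of `κ b → R` with respect to the
additive character `e`; it diagonalises the block translations. -/
def fourierSubst [Fintype R] [∀ b, DecidableEq (κ b)] (e : AddChar R K) :
    MvPolynomial (Σ b, κ b → R) K →ₐ[K] MvPolynomial (Σ b, κ b → R) K :=
  aeval fun i ↦ ∑ χ : κ i.1 → R, C (e (χ ⬝ᵥ i.2)) * X ⟨i.1, χ⟩

variable [Fintype R] [∀ b, DecidableEq (κ b)]

lemma fourierSubst_X (e : AddChar R K) (b : ι) (w : κ b → R) :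
    fourierSubst e (X ⟨b, w⟩) = ∑ χ : κ b → R, C (e (χ ⬝ᵥ w)) * X ⟨b, χ⟩ :=
  aeval_X _ _

lemma fourierSubst_comp_rename_blockShift (e : AddChar R K) (v : ∀ b, κ b → R) :
    (fourierSubst e).comp (rename (blockShift v)) =
      (scaleVars fun i ↦ e (i.2 ⬝ᵥ v i.1)).comp (fourierSubst e) := by
  refine algHom_ext fun ⟨b, w⟩ ↦ ?_
  rw [AlgHom.comp_apply, AlgHom.comp_apply, rename_X, blockShift_apply, fourierSubst_X,
    fourierSubst_X, map_sum]
  refine Finset.sum_congr rfl fun χ _ ↦ ?_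
  rw [map_mul, scaleVars, aeval_X, algHom_C, algebraMap_eq, ← mul_assoc, ← C_mul,
    ← AddChar.map_add_eq_mul, dotProduct_add]

lemma fourierSubst_inv_comp_fourierSubst {e : AddChar R K} (he : e.IsPrimitive) :
    (fourierSubst e⁻¹).comp (fourierSubst e) =
      scaleVars fun i : Σ b, κ b → R ↦ (Fintype.card (κ i.1 → R) : K) := by
  classical
  refine algHom_ext fun ⟨b, w⟩ ↦ ?_
  have horth (w' : κ b → R) : ∑ χ : κ b → R, e (χ ⬝ᵥ w) * e⁻¹ (w' ⬝ᵥ χ) =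
      if w - w' = 0 then (Fintype.card (κ b → R) : K) else 0 := by
    rw [← sum_addChar_dotProduct he]
    refine Finset.sum_congr rfl fun χ _ ↦ ?_
    rw [AddChar.inv_apply, ← AddChar.map_add_eq_mul, dotProduct_sub, sub_eq_add_neg,
      dotProduct_comm w']
  rw [AlgHom.comp_apply, fourierSubst_X, map_sum]
  simp only [map_mul, algHom_C, algebraMap_eq, fourierSubst_X, Finset.mul_sum, ← mul_assoc]
  rw [Finset.sum_comm, Finset.sum_eq_single w]
  · simp only [← C_mul, ← Finset.sum_mul, ← map_sum, horth]
    rw [if_pos (sub_self w), scaleVars, aeval_X]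
  · intro w' _ hw'
    simp only [← C_mul, ← Finset.sum_mul, ← map_sum, horth]
    rw [if_neg (sub_ne_zero.2 hw'.symm), C_0, zero_mul]
  · simp

lemma fourierSubst_injective [CharZero K] {e : AddChar R K} (he : e.IsPrimitive) :
    Function.Injective
      (fourierSubst e : MvPolynomial (Σ b, κ b → R) K → MvPolynomial (Σ b, κ b → R) K) := by
  refine Function.Injective.of_comp (f := fourierSubst e⁻¹) ?_
  rw [← AlgHom.coe_comp, fourierSubst_inv_comp_fourierSubst he]
  exact scaleVars_injective fun i ↦ Nat.cast_ne_zero.2 Fintype.card_ne_zero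

lemma exists_isBlockSemiInvariant_of_equivariant [CharZero K] [Fintype ι] {e : AddChar R K}
    (he : e.IsPrimitive) {r s : ℕ} (hs : (s : R) = 0)
    {P : (Σ b, κ b → R) → MvPolynomial (Σ b, κ b → R) K} (hP₀ : P ≠ 0)
    (hP : ∀ v i, rename (blockShift v) (P i) = P (blockShift v i)) (hsum : ∑ i, P i = 0)
    (hpow : ∑ i, P i ^ r = 0) :
    ∃ (Z : (∀ b, κ b → R) → K) (c : (Σ b, κ b → R) → K), IsBlockSemiInvariant Z c ∧ c ≠ 0 ∧
      (∀ v, Z v ^ s = 1) ∧ ∑ i, c i = 0 ∧ ∑ i, c i ^ r = 0 := by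
  have hQ₀ : (fun i ↦ fourierSubst e (P i)) ≠ 0 := by
    obtain ⟨i, hi⟩ := Function.ne_iff.1 hP₀
    exact Function.ne_iff.2 ⟨i, (map_ne_zero_iff _ (fourierSubst_injective he)).2 hi⟩
  obtain ⟨d, hd₀, hd_sum, hd_pow⟩ := exists_coeff_sum_pow_eq_zero hQ₀ (r := r)
    (by rw [← map_sum, hsum, map_zero]) (by simp only [← map_pow, ← map_sum, hpow, map_zero])
  refine ⟨fun v ↦ d.prod fun i n ↦ e (i.2 ⬝ᵥ v i.1) ^ n, _, fun v i ↦ ?_, hd₀, fun v ↦ ?_,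
    hd_sum, hd_pow⟩
  · rw [← hP, ← AlgHom.comp_apply, fourierSubst_comp_rename_blockShift, AlgHom.comp_apply,
      coeff_scaleVars]
  · simp only [Finsupp.prod, ← Finset.prod_pow]
    refine Finset.prod_eq_one fun i _ ↦ ?_
    rw [← pow_mul, mul_comm, pow_mul, ← AddChar.map_nsmul_eq_pow, nsmul_eq_mul, hs, zero_mul,
      AddChar.map_zero_eq_one, one_pow]

end FourierSubstitution

section EquivariantFamilies

open MvPolynomial

lemma eq_zero_of_blockShift_equivariant {K : Type*} [Field K] [Algebra ℚ K]
    (hK : Module.finrank ℚ K = 2) {ζ : K} (hζ : IsPrimitiveRoot ζ 3) {k : Fin 3 → ℕ}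
    (hk : StrictAnti k)
    {P : (Σ b, Fin (k b) → ZMod 3) → MvPolynomial (Σ b, Fin (k b) → ZMod 3) K}
    (hP : ∀ v i, rename (blockShift v) (P i) = P (blockShift v i)) (hsum : ∑ i, P i = 0)
    (hcube : ∑ i, P i ^ 3 = 0) : P = 0 := by
  have : CharZero K := algebraRat.charZero K
  by_contra hP₀
  obtain ⟨Z, c, hc, hc₀, hZ, hc_sum, hc_cube⟩ := exists_isBlockSemiInvariant_of_equivariant
    (AddChar.zmodChar_primitive_of_primitive_root 3 hζ) (s := 3) (ZMod.natCast_self 3) hP₀ hP hsum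
    hcube
  exact hc₀ (eq_zero_of_isBlockSemiInvariant hK hk (by simp) hc hZ hc_sum hc_cube)

lemma finrank_cyclotomicField_three : Module.finrank ℚ (CyclotomicField 3 ℚ) = 2 :=
  (IsCyclotomicExtension.finrank (n := 3) (CyclotomicField 3 ℚ)
    (Polynomial.cyclotomic.irreducible_rat (by norm_num))).trans rfl

lemma eq_zero_of_perm_equivariant {J : Type*} [Fintype J] {k : Fin 3 → ℕ} (hk : StrictAnti k)
    (hJ : Fintype.card J = ∑ b, 3 ^ k b) {P : J → MvPolynomial J ℚ}
    (hP : ∀ (σ : Equiv.Perm J) i, rename σ (P i) = P (σ i)) (hsum : ∑ i, P i = 0)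
    (hcube : ∑ i, P i ^ 3 = 0) : P = 0 := by
  let K := CyclotomicField 3 ℚ
  let e : J ≃ Σ b, Fin (k b) → ZMod 3 := Fintype.equivOfCardEq (by simp [hJ])
  let Φ : MvPolynomial J ℚ →+* MvPolynomial (Σ b, Fin (k b) → ZMod 3) K :=
    (map (algebraMap ℚ K)).comp (rename e).toRingHom
  have hΦ (p : MvPolynomial J ℚ) : Φ p = map (algebraMap ℚ K) (rename e p) := rfl
  have hΦ_inj : Function.Injective Φ :=
    (map_injective _ (algebraMap ℚ K).injective).comp (rename_injective e e.injective)
  have hequiv (v) (i) : rename (blockShift v) (Φ (P (e.symm i))) =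
      Φ (P (e.symm (blockShift v i))) := by
    have h := hP ((e.trans (blockShift v)).trans e.symm) (e.symm i)
    simp only [Equiv.trans_apply, Equiv.apply_symm_apply] at h
    rw [← h, hΦ, hΦ, ← map_rename, rename_rename, rename_rename]
    congr 3
    funext j
    simp
  have hzero : (fun i ↦ Φ (P (e.symm i))) = 0 :=
    eq_zero_of_blockShift_equivariant finrank_cyclotomicField_three
      (IsCyclotomicExtension.zeta_spec 3 ℚ K) hk hequiv
      (by rw [← map_sum, Equiv.sum_comp e.symm P, hsum, map_zero])
      (by simp only [← map_pow, ← map_sum, Equiv.sum_comp e.symm (P · ^ 3), hcube, map_zero])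
  ext1 i
  simpa [map_eq_zero_iff Φ hΦ_inj] using congrFun hzero (e i)

end EquivariantFamilies

section GaloisTrace

lemma sum_smul_algebraMap_eq_finrank_smul_trace (G : Type*) [Group G] [Fintype G] {F E L : Type*}
    [Field F] [Field E] [Field L] [Algebra F E] [Algebra E L] [Algebra F L] [IsScalarTower F E L]
    [MulSemiringAction G L] [IsGaloisGroup G F L] (x : E) :
    ∑ g : G, g • algebraMap E L x =
      algebraMap F L (Module.finrank E L • Algebra.trace F E x) := by
  have : IsGalois F L := IsGaloisGroup.isGalois G F L
  have : FiniteDimensional F L := IsGaloisGroup.finiteDimensional G F L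
  have : FiniteDimensional F E := FiniteDimensional.left F E L
  have : FiniteDimensional E L := FiniteDimensional.right F E L
  rw [← map_nsmul, ← Algebra.trace_algebraMap, Algebra.trace_trace, trace_eq_sum_automorphisms]
  exact Fintype.sum_equiv (IsGaloisGroup.mulEquivAlgEquiv G F L).toEquiv _ _ fun _ ↦ rfl

end GaloisTrace

section OrbitFamilies

open MvPolynomial

variable {J : Type*} [DecidableEq J]

lemma sum_eq_zero_of_sum_perm_apply_eq_zero [Fintype J] {A : Type*} [AddCommGroup A]
    [IsAddTorsionFree A] {z : J} {f : J → A} (h : ∑ σ : Equiv.Perm J, f (σ z) = 0) :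
    ∑ i, f i = 0 := by
  have hany (j : J) : ∑ σ : Equiv.Perm J, f (σ j) = 0 := by
    rw [← h]
    exact Fintype.sum_equiv (Equiv.mulRight (Equiv.swap z j)) _ _ fun σ ↦ by simp
  have hdouble : ∑ σ : Equiv.Perm J, ∑ j, f (σ j) = 0 := by
    rw [Finset.sum_comm]
    exact Finset.sum_eq_zero fun j _ ↦ hany j
  simp only [Equiv.sum_comp, Finset.sum_const] at hdouble
  exact (smul_eq_zero_iff_right (Finset.card_ne_zero.2 Finset.univ_nonempty)).1 hdouble

variable {R : Type*} [CommSemiring R]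

/-- The conjugates of `p`, one for each variable. The transposition `(z i)` represents the coset of
permutations taking `z` to `i`, so the family is meaningful when `p` is invariant under the
stabiliser of `z`. -/
def orbitFamily (z : J) (p : MvPolynomial J R) (i : J) : MvPolynomial J R :=
  rename (Equiv.swap z i) p

lemma orbitFamily_self (z : J) (p : MvPolynomial J R) : orbitFamily z p z = p := by
  rw [orbitFamily, Equiv.swap_self]
  exact rename_id_apply p

variable {z : J} {p : MvPolynomial J R}

lemma orbitFamily_apply_perm (hp : ∀ σ : Equiv.Perm J, σ z = z → rename σ p = p)
    (σ : Equiv.Perm J) : orbitFamily z p (σ z) = rename σ p := by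
  have hfix := hp (Equiv.swap z (σ z) * σ) (by simp)
  rw [orbitFamily, ← congrArg (rename _) hfix, rename_rename, ← Equiv.Perm.coe_mul,
    Equiv.swap_mul_self_mul]

lemma rename_orbitFamily (hp : ∀ σ : Equiv.Perm J, σ z = z → rename σ p = p)
    (σ : Equiv.Perm J) (i : J) : rename σ (orbitFamily z p i) = orbitFamily z p (σ i) := by
  have h := orbitFamily_apply_perm hp (σ * Equiv.swap z i)
  rw [Equiv.Perm.mul_apply, Equiv.swap_apply_left] at h
  rw [h, orbitFamily, rename_rename, Equiv.Perm.coe_mul]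

lemma eq_zero_of_sum_rename_eq_zero [Fintype J] {k : Fin 3 → ℕ} (hk : StrictAnti k)
    (hJ : Fintype.card J = ∑ b, 3 ^ k b) {z : J} {p : MvPolynomial J ℚ}
    (hp : ∀ σ : Equiv.Perm J, σ z = z → rename σ p = p)
    (hsum : ∑ σ : Equiv.Perm J, rename σ p = 0) (hcube : ∑ σ : Equiv.Perm J, rename σ p ^ 3 = 0) :
    p = 0 := by
  simp only [← orbitFamily_apply_perm hp] at hsum hcube
  rw [← orbitFamily_self z p, eq_zero_of_perm_equivariant hk hJ (rename_orbitFamily hp)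
    (sum_eq_zero_of_sum_perm_apply_eq_zero hsum)
    (sum_eq_zero_of_sum_perm_apply_eq_zero (f := fun i ↦ orbitFamily z p i ^ 3) hcube),
    Pi.zero_apply]

end OrbitFamilies

section GeneralExtension

open GenExt MvPolynomial

variable {n : ℕ}

lemma permAut_algebraMap (σ : Equiv.Perm (Fin n)) (p : MvPolynomial (Fin n) ℚ) :
    permAut n σ (algebraMap _ (L n) p) = algebraMap _ (L n) (rename σ p) :=
  IsFractionRing.ringEquivOfRingEquiv_algebraMap _ p

lemma permAut_mul (σ τ : Equiv.Perm (Fin n)) (x : L n) :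
    permAut n (σ * τ) x = permAut n σ (permAut n τ x) := by
  obtain ⟨a, b, -, rfl⟩ := IsFractionRing.div_surjective (MvPolynomial (Fin n) ℚ) x
  simp only [map_div₀, permAut_algebraMap, rename_rename, Equiv.Perm.coe_mul]

lemma permAut_one (x : L n) : permAut n 1 x = x := by
  obtain ⟨a, b, -, rfl⟩ := IsFractionRing.div_surjective (MvPolynomial (Fin n) ℚ) x
  simp only [map_div₀, permAut_algebraMap, Equiv.Perm.coe_one, rename_id_apply]

instance : MulSemiringAction (Equiv.Perm (Fin n)) (L n) where
  smul σ x := permAut n σ x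
  one_smul := permAut_one
  mul_smul := permAut_mul
  smul_zero _ := map_zero _
  smul_add _ := map_add _
  smul_one _ := map_one _
  smul_mul _ := map_mul _

lemma perm_smul_eq_permAut (σ : Equiv.Perm (Fin n)) (x : L n) : σ • x = permAut n σ x := rfl

instance : IsGaloisGroup (Equiv.Perm (Fin n)) (F n) (L n) where
  faithful.eq_of_smul_eq_smul {σ τ} h := by
    ext i
    have hi := h (algebraMap (MvPolynomial (Fin n) ℚ) (L n) (X i))
    simp only [perm_smul_eq_permAut, permAut_algebraMap, rename_X] at hi
    rw [X_injective (IsFractionRing.injective (MvPolynomial (Fin n) ℚ) (L n) hi)]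
  commutes.smul_comm σ a x := by
    simp only [perm_smul_eq_permAut, Subfield.smul_def, smul_eq_mul, map_mul,
      a.2 σ (Set.mem_univ σ)]
  isInvariant.isInvariant x hx := ⟨⟨x, fun σ _ ↦ hx σ⟩, rfl⟩

instance : IsScalarTower (F n) (E n) (L n) := .of_algebraMap_eq fun _ ↦ rfl

lemma sum_permAut_eq_zero_of_trace_eq_zero {δ : E n} (h : Algebra.trace (F n) (E n) δ = 0) :
    ∑ σ : Equiv.Perm (Fin n), permAut n σ (δ : L n) = 0 := by
  have hsum := sum_smul_algebraMap_eq_finrank_smul_trace (F := F n) (L := L n)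
    (Equiv.Perm (Fin n)) δ
  rwa [h, smul_zero, map_zero] at hsum

lemma exists_common_denominator_permAut (x : L n) :
    ∃ D p : MvPolynomial (Fin n) ℚ, D ≠ 0 ∧ ∀ σ : Equiv.Perm (Fin n),
      algebraMap _ (L n) (rename σ p) = algebraMap _ (L n) D * permAut n σ x := by
  obtain ⟨a, b, hb, rfl⟩ := IsFractionRing.div_surjective (MvPolynomial (Fin n) ℚ) x
  have hb₀ : b ≠ 0 := nonZeroDivisors.ne_zero hb
  let D := ∏ σ : Equiv.Perm (Fin n), rename σ b
  have hD₀ : D ≠ 0 := Finset.prod_ne_zero_iff.2 fun σ _ ↦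
    (map_ne_zero_iff _ (rename_injective σ σ.injective)).2 hb₀
  have hD_symm (τ : Equiv.Perm (Fin n)) : rename τ D = D := by
    rw [map_prod]
    refine Fintype.prod_equiv (Equiv.mulLeft τ) _ _ fun σ ↦ ?_
    rw [rename_rename, Equiv.coe_mulLeft, Equiv.Perm.coe_mul]
  obtain ⟨q, hq⟩ : b ∣ D := by
    simpa using Finset.dvd_prod_of_mem (fun σ : Equiv.Perm (Fin n) ↦ rename σ b)
      (Finset.mem_univ 1)
  have hbL : algebraMap _ (L n) b ≠ 0 :=
    (map_ne_zero_iff _ (IsFractionRing.injective _ (L n))).2 hb₀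
  refine ⟨D, a * q, hD₀, fun σ ↦ ?_⟩
  rw [← permAut_algebraMap, ← hD_symm σ, ← permAut_algebraMap, ← map_mul]
  congr 1
  rw [hq, map_mul, map_mul]
  field_simp

lemma eq_zero_of_sum_permAut_eq_zero {k : Fin 3 → ℕ} (hk : StrictAnti k) (hn : n = ∑ b, 3 ^ k b)
    {z : Fin n} {x : L n} (hx : ∀ σ : Equiv.Perm (Fin n), σ z = z → permAut n σ x = x)
    (hsum : ∑ σ, permAut n σ x = 0) (hcube : ∑ σ, permAut n σ (x ^ 3) = 0) : x = 0 := by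
  have hinj := IsFractionRing.injective (MvPolynomial (Fin n) ℚ) (L n)
  obtain ⟨D, p, hD, hp⟩ := exists_common_denominator_permAut x
  have hp_one : algebraMap _ (L n) p = algebraMap _ (L n) D * x := by
    simpa only [Equiv.Perm.coe_one, rename_id_apply, permAut_one] using hp 1
  have hp_fix (σ : Equiv.Perm (Fin n)) (hσ : σ z = z) : rename σ p = p :=
    hinj (by rw [hp, hx σ hσ, hp_one])
  have hp_sum : ∑ σ : Equiv.Perm (Fin n), rename σ p = 0 := hinj (by
    simp only [map_sum, hp, ← Finset.mul_sum, hsum, mul_zero, map_zero])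
  have hp_cube : ∑ σ : Equiv.Perm (Fin n), rename σ p ^ 3 = 0 := hinj (by
    simp only [map_sum, map_pow, hp, mul_pow, ← Finset.mul_sum, map_zero] at hcube ⊢
    rw [hcube, mul_zero])
  have hp₀ : p = 0 :=
    eq_zero_of_sum_rename_eq_zero hk (by rw [Fintype.card_fin, hn]) hp_fix hp_sum hp_cube
  rw [hp₀, map_zero] at hp_one
  exact (mul_eq_zero.1 hp_one.symm).resolve_left ((map_ne_zero_iff _ hinj).2 hD)

end GeneralExtension

end HermiteJoubert

/-- **Theorem 1.2 (precise form over ℚ):** for `n = 3^k₁ + 3^k₂ + 3^k₃` with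
`k₁ > k₂ > k₃ ≥ 0`, the general field extension `Eₙ/Fₙ` of degree `n` over `ℚ` contains no
nonzero element `δ` with `Tr_{Eₙ/Fₙ}(δ) = Tr_{Eₙ/Fₙ}(δ³) = 0`. -/
theorem no_traceZero_cube_traceZero_in_general_extension
    (k₁ k₂ k₃ : ℕ) (h₁ : k₁ > k₂) (h₂ : k₂ > k₃) (n : ℕ)
    (hn : n = 3 ^ k₁ + 3 ^ k₂ + 3 ^ k₃) :
    ¬ ∃ δ : GenExt.E n, δ ≠ 0 ∧
      Algebra.trace (GenExt.F n) (GenExt.E n) δ = 0 ∧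
      Algebra.trace (GenExt.F n) (GenExt.E n) (δ ^ 3) = 0 := by
  rintro ⟨δ, hδ, htrace, htrace_cube⟩
  have hk : StrictAnti ![k₁, k₂, k₃] := by
    simpa [Fin.strictAnti_iff_succ_lt, Fin.forall_fin_two] using ⟨h₁, h₂⟩
  let z : Fin n := ⟨0, by rw [hn]; positivity⟩
  have hfix (σ : Equiv.Perm (Fin n)) (hσ : σ z = z) : GenExt.permAut n σ δ = δ :=
    δ.2 σ fun i hi ↦ by rwa [show i = z from Fin.ext hi]
  have hsum := HermiteJoubert.sum_permAut_eq_zero_of_trace_eq_zero htrace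
  have hcube := HermiteJoubert.sum_permAut_eq_zero_of_trace_eq_zero htrace_cube
  exact hδ (Subtype.ext (HermiteJoubert.eq_zero_of_sum_permAut_eq_zero hk
    (by simpa [Fin.sum_univ_three] using hn) hfix hsum hcube))

end
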